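/- Reverse parabolic Moser iteration for super-caloric functions: let p, q ∈ (1,∞] satisfy 1/p + 1/q < 2/d, let ε ∈ (0,1/4), and assume s′ − t₀ ≥ εn² and t₀ + n² − s″ ≥ εn². There exist C₁₀ < ∞ and κ > 0, depending only on d, p, q, ε, C_reg and C_riso, such that for every choice of edge weights ω, every u : [t₀,t₀+n²] × V → (0,∞) that is super-caloric on Q(n), every β ∈ (0,1/2), every α ∈ (0, β/2) and all σ′, σ with 1/2 ≤ σ′ < σ ≤ 1: ‖u‖_{β,Q(σ′n),μ^ω} ≤ (C₁₀·(max{1,‖μ^ω‖_{p,B(x₀,n)}}·max{1,‖ν^ω‖_{q,B(x₀,n)}})/(σ−σ′)²)^{κ·(1/α − 1/β)}·‖u‖_{α,Q(σn),μ^ω}. -/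

import Mathlib

open Finset MeasureTheory
open scoped ENNReal

noncomputable section

namespace RCM

variable {V : Type*}

/-- `μ^ω(x)`, the sum of the weights of edges incident to `x`. -/
def mu (nbr : V → Finset V) (ω : V → V → ℝ) (x : V) : ℝ := ∑ y ∈ nbr x, ω x y

/-- `ν^ω(x)`, the sum of the reciprocals of the weights of edges incident to `x`. -/
def nu (nbr : V → Finset V) (ω : V → V → ℝ) (x : V) : ℝ := ∑ y ∈ nbr x, (ω x y)⁻¹

/-- `(L_Y^ω f)(x)`. -/
def lap (nbr : V → Finset V) (ω : V → V → ℝ) (f : V → ℝ) (x : V) : ℝ :=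
  (mu nbr ω x)⁻¹ * ∑ y ∈ nbr x, ω x y * (f y - f x)

/-- space-averaged norm `‖f‖_{p,A}` for a real exponent `p`. -/
def nrm (A : Finset V) (p : ℝ) (f : V → ℝ) : ℝ :=
  ((A.card : ℝ)⁻¹ * ∑ x ∈ A, |f x| ^ p) ^ (1 / p)

/-- weighted space-averaged norm `‖f‖_{p,A,φ}` for a real exponent `p`. -/
def nrmW (A : Finset V) (p : ℝ) (φ : V → ℝ) (f : V → ℝ) : ℝ :=
  ((A.card : ℝ)⁻¹ * ∑ x ∈ A, |f x| ^ p * φ x) ^ (1 / p)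

/-- space-averaged norm `‖f‖_{p,A}` for an extended exponent `p ∈ (0,∞]`;
for `p = ∞` this is the maximum of `|f|` over `A`. -/
def nrmE (A : Finset V) (p : ℝ≥0∞) (f : V → ℝ) : ℝ :=
  if p = ⊤ then sSup ((fun x => |f x|) '' (A : Set V)) else nrm A p.toReal f

/-- weighted average `(u)_{A,π}`. -/
def wavg (A : Finset V) (π : V → ℝ) (u : V → ℝ) : ℝ :=
  (∑ x ∈ A, π x * u x) / ∑ x ∈ A, π x

open Classical in
/-- relative internal boundary `∂_B A`. -/
def relBdry (G : SimpleGraph V) (B A : Finset V) : Finset V :=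
  A.filter fun z => ∃ y ∈ B, y ∉ A ∧ G.Adj z y

open Classical in
/-- internal boundary `∂B`. -/
def intBdry (G : SimpleGraph V) (B : Finset V) : Finset V :=
  B.filter fun z => ∃ y, y ∉ B ∧ G.Adj z y

open Classical in
/-- Dirichlet sum `Σ_{x,y ∈ B, x∼y} ω(x,y) (u(x)-u(y))²`. -/
def dSum (G : SimpleGraph V) (ω : V → V → ℝ) (B : Finset V) (u : V → ℝ) : ℝ :=
  ∑ x ∈ B, ∑ y ∈ B, if G.Adj x y then ω x y * (u x - u y) ^ 2 else 0

/-- `E^ω_{η²}(u) = (1/2) Σ_{x,y} η(x)² ω(x,y) (u(y)-u(x))²`. -/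
def energySq (ω : V → V → ℝ) (η u : V → ℝ) : ℝ :=
  (1 / 2) * ∑' x, ∑' y, η x ^ 2 * ω x y * (u y - u x) ^ 2

/-- `E^{ω,η}(u) = (1/2) Σ_{x,y} min(η(x)²,η(y)²) ω(x,y) (u(y)-u(x))²`. -/
def energyMin (ω : V → V → ℝ) (η u : V → ℝ) : ℝ :=
  (1 / 2) * ∑' x, ∑' y, min (η x ^ 2) (η y ^ 2) * ω x y * (u y - u x) ^ 2

/-- `‖∇η‖_{ℓ∞(E)}`, the supremum of `|η(y)-η(x)|` over edges `{x,y}`. -/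
def gradSup (G : SimpleGraph V) (η : V → ℝ) : ℝ :=
  sSup {r : ℝ | ∃ x y, G.Adj x y ∧ r = |η y - η x|}

/-- `u` is caloric on `I × B`: `∂_t u = L_Y^ω u` on `I × B`. -/
def Caloric (nbr : V → Finset V) (ω : V → V → ℝ) (I : Set ℝ) (B : Set V)
    (u : ℝ → V → ℝ) : Prop :=
  ∀ x ∈ B, ∀ t ∈ I, HasDerivAt (fun s => u s x) (lap nbr ω (u t) x) t

/-- `u` is sub-caloric on `I × B`: `∂_t u ≤ L_Y^ω u` on `I × B`. -/
def SubCaloric (nbr : V → Finset V) (ω : V → V → ℝ) (I : Set ℝ) (B : Set V)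
    (u : ℝ → V → ℝ) : Prop :=
  ∀ x ∈ B, ∀ t ∈ I, ∃ d, HasDerivAt (fun s => u s x) d t ∧ d ≤ lap nbr ω (u t) x

/-- `u` is super-caloric on `I × B`: `∂_t u ≥ L_Y^ω u` on `I × B`. -/
def SuperCaloric (nbr : V → Finset V) (ω : V → V → ℝ) (I : Set ℝ) (B : Set V)
    (u : ℝ → V → ℝ) : Prop :=
  ∀ x ∈ B, ∀ t ∈ I, ∃ d, HasDerivAt (fun s => u s x) d t ∧ lap nbr ω (u t) x ≤ d

/-- space-time norm `‖u‖_{p,[a,b]×B,φ}`. -/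
def nrmST (a b : ℝ) (B : Finset V) (p : ℝ) (φ : V → ℝ) (u : ℝ → V → ℝ) : ℝ :=
  ((b - a)⁻¹ * ∫ t in a..b, nrmW B p φ (u t) ^ p) ^ (1 / p)

end RCM

namespace RCM

variable {V : Type*}

/-- Elementary lower bound behind the energy estimate for the test function `u ^ (γ - 1)`. -/
theorem sq_rpow_half_sub_le {γ a b : ℝ} (hγ : 0 < γ) (hγ' : γ ≤ 1 / 2) (hb : 0 < b)
    (hab : b ≤ a) :
    (a ^ (γ / 2) - b ^ (γ / 2)) ^ 2 ≤ γ * (a ^ (γ - 1) - b ^ (γ - 1)) * (b - a) := by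
  have ha : 0 < a := hb.trans_le hab
  obtain ⟨r, hr⟩ : ∃ r, r = b / a := ⟨_, rfl⟩
  have hr0 : 0 < r := hr ▸ div_pos hb ha
  have hr1 : r ≤ 1 := hr ▸ (div_le_one ha).2 hab
  have hbr : b = r * a := by rw [hr]; field_simp
  have hsq : a ^ γ = (a ^ (γ / 2)) ^ 2 := by
    rw [← Real.rpow_natCast, ← Real.rpow_mul ha.le]; congr 1; push_cast; ring
  have ha1 : a ^ (γ - 1) * a = a ^ γ := by
    rw [Real.rpow_sub_one ha.ne']; field_simp
  have h1 : r ^ (-(1 / 2) : ℝ) ≤ r ^ (γ - 1) :=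
    Real.rpow_le_rpow_of_exponent_ge hr0 hr1 (by linarith)
  have h2 : r ≤ r ^ (γ / 2) := by
    simpa using Real.rpow_le_rpow_of_exponent_ge hr0 hr1 (show γ / 2 ≤ 1 by linarith)
  have h2' : r ^ (γ / 2) ≤ 1 := Real.rpow_le_one hr0.le hr1 (by linarith)
  have h3 : 1 + Real.log r * (γ / 2) ≤ r ^ (γ / 2) := by
    rw [Real.rpow_def_of_pos hr0]; linarith [Real.add_one_le_exp (Real.log r * (γ / 2))]
  have h4 : -(1 / 2) * Real.log r ≤ r ^ (-(1 / 2) : ℝ) - 1 := by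
    rw [← Real.log_rpow hr0]
    exact Real.log_le_sub_one_of_pos (Real.rpow_pos_of_pos hr0 _)
  have h5 : 1 - r ^ (γ / 2) ≤ γ * (r ^ (γ - 1) - 1) := by nlinarith
  have h6 : (1 - r ^ (γ / 2)) ^ 2 ≤ γ * (r ^ (γ - 1) - 1) * (1 - r) := by
    nlinarith
  have e1 : (a ^ (γ / 2) - b ^ (γ / 2)) ^ 2 = a ^ γ * (1 - r ^ (γ / 2)) ^ 2 := by
    rw [hbr, Real.mul_rpow hr0.le ha.le, hsq]; ring
  have e2 : γ * (a ^ (γ - 1) - b ^ (γ - 1)) * (b - a)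
      = a ^ γ * (γ * (r ^ (γ - 1) - 1) * (1 - r)) := by
    rw [hbr, Real.mul_rpow hr0.le ha.le, ← ha1]; ring
  rw [e1, e2]
  exact mul_le_mul_of_nonneg_left h6 (Real.rpow_nonneg ha.le _)

theorem rpow_sub_one_mul_sub_le {γ a b : ℝ} (hγ : 0 < γ) (hγ' : γ ≤ 1 / 2) (hb : 0 < b)
    (ha : 0 < a) :
    γ * a ^ (γ - 1) * (a - b) ≤ 2 * a ^ (γ / 2) * (a ^ (γ / 2) - b ^ (γ / 2)) := by
  obtain ⟨r, hr⟩ : ∃ r, r = b / a := ⟨_, rfl⟩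
  have hr0 : 0 < r := hr ▸ div_pos hb ha
  have hbr : b = r * a := by rw [hr]; field_simp
  have hsq : a ^ γ = (a ^ (γ / 2)) ^ 2 := by
    rw [← Real.rpow_natCast, ← Real.rpow_mul ha.le]; congr 1; push_cast; ring
  have ha1 : a ^ (γ - 1) * a = a ^ γ := by
    rw [Real.rpow_sub_one ha.ne']; field_simp
  have h1 : r ^ (γ / 2) ≤ 1 + γ / 2 * (r - 1) := by
    have := Real.geom_mean_le_arith_mean2_weighted (w₁ := γ / 2) (w₂ := 1 - γ / 2) (p₁ := r)
      (p₂ := 1) (by linarith) (by linarith) hr0.le zero_le_one (by ring)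
    rw [Real.one_rpow] at this; linarith
  have e1 : γ * a ^ (γ - 1) * (a - b) = a ^ γ * (γ * (1 - r)) := by
    rw [hbr, ← ha1]; ring
  have e2 : 2 * a ^ (γ / 2) * (a ^ (γ / 2) - b ^ (γ / 2))
      = a ^ γ * (2 * (1 - r ^ (γ / 2))) := by
    rw [hbr, Real.mul_rpow hr0.le ha.le, hsq]; ring
  rw [e1, e2]
  exact mul_le_mul_of_nonneg_left (by linarith) (Real.rpow_nonneg ha.le _)

theorem edge_energy_of_le {γ a b h k : ℝ} (hγ : 0 < γ) (hγ' : γ ≤ 1 / 2) (ha : 0 < a)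
    (hb : 0 < b) (hk : 0 ≤ k) (hkh : k ≤ h) :
    (h * a ^ (γ / 2) - k * b ^ (γ / 2)) ^ 2 - 42 * (h - k) ^ 2 * a ^ γ ≤
      4 * (γ * (h ^ 2 * a ^ (γ - 1) - k ^ 2 * b ^ (γ - 1)) * (b - a)) := by
  have hsq : a ^ γ = (a ^ (γ / 2)) ^ 2 := by
    rw [← Real.rpow_natCast, ← Real.rpow_mul ha.le]; congr 1; push_cast; ring
  have h1 : (a ^ (γ / 2) - b ^ (γ / 2)) ^ 2 ≤ γ * (a ^ (γ - 1) - b ^ (γ - 1)) * (b - a) := by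
    rcases le_total b a with h | h
    · exact sq_rpow_half_sub_le hγ hγ' hb h
    · have := sq_rpow_half_sub_le hγ hγ' ha h
      nlinarith
  have h2 := rpow_sub_one_mul_sub_le hγ hγ' hb ha
  rw [hsq]
  set A := a ^ (γ / 2)
  set B := b ^ (γ / 2)
  have hA : 0 ≤ A := Real.rpow_nonneg ha.le _
  have e : 4 * (γ * (h ^ 2 * a ^ (γ - 1) - k ^ 2 * b ^ (γ - 1)) * (b - a))
      = 4 * k ^ 2 * (γ * (a ^ (γ - 1) - b ^ (γ - 1)) * (b - a))
        - 4 * (h ^ 2 - k ^ 2) * (γ * a ^ (γ - 1) * (a - b)) := by ring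
  rw [e]
  have h3 : 4 * k ^ 2 * (A - B) ^ 2 ≤
      4 * k ^ 2 * (γ * (a ^ (γ - 1) - b ^ (γ - 1)) * (b - a)) :=
    mul_le_mul_of_nonneg_left h1 (by positivity)
  have hhk : 0 ≤ h ^ 2 - k ^ 2 := by nlinarith
  have h4 : 4 * (h ^ 2 - k ^ 2) * (γ * a ^ (γ - 1) * (a - b)) ≤
      4 * (h ^ 2 - k ^ 2) * (2 * A * (A - B)) :=
    mul_le_mul_of_nonneg_left h2 (by positivity)
  obtain ⟨m, rfl⟩ : ∃ m, h = k + m := ⟨h - k, by ring⟩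
  have hm : 0 ≤ m := by linarith
  have hB : 0 ≤ B := Real.rpow_nonneg hb.le _
  have h5 : 0 ≤ m ^ 2 * (A * B) := by positivity
  nlinarith [sq_nonneg (k * (A - B) - 8 * (m * A)), sq_nonneg (k * (A - B) - m * A),
    sq_nonneg (m * A)]

/-- Edgewise energy estimate with a cutoff taking the values `h` and `k` at the endpoints. -/
theorem edge_energy {γ a b h k : ℝ} (hγ : 0 < γ) (hγ' : γ ≤ 1 / 2) (ha : 0 < a)
    (hb : 0 < b) (hh : 0 ≤ h) (hk : 0 ≤ k) :
    (h * a ^ (γ / 2) - k * b ^ (γ / 2)) ^ 2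
        - 42 * (h - k) ^ 2 * ((if 0 < h then a ^ γ else 0) + if 0 < k then b ^ γ else 0) ≤
      4 * (γ * (h ^ 2 * a ^ (γ - 1) - k ^ 2 * b ^ (γ - 1)) * (b - a)) := by
  have pa : 0 ≤ a ^ γ := Real.rpow_nonneg ha.le _
  have pb : 0 ≤ b ^ γ := Real.rpow_nonneg hb.le _
  have ia : 0 ≤ if 0 < h then a ^ γ else 0 := by split_ifs <;> simp [pa]
  have ib : 0 ≤ if 0 < k then b ^ γ else 0 := by split_ifs <;> simp [pb]
  rcases lt_trichotomy k h with hkh | hkh | hkh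
  · have := edge_energy_of_le hγ hγ' ha hb hk hkh.le
    rw [if_pos (hk.trans_lt hkh)]
    nlinarith [mul_nonneg (sq_nonneg (h - k)) ib]
  · have := edge_energy_of_le hγ hγ' ha hb hk hkh.le
    subst hkh
    simpa using this
  · have := edge_energy_of_le hγ hγ' hb ha hh hkh.le
    rw [if_pos (hh.trans_lt hkh)]
    nlinarith [mul_nonneg (sq_nonneg (h - k)) ia]

theorem sum_rpow_mul_rpow_le {ι : Type*} (s : Finset ι) {f g : ι → ℝ} {θ θ' : ℝ}
    (hθ : 0 < θ) (hθ' : 0 < θ') (hsum : θ + θ' = 1)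
    (hf : ∀ i ∈ s, 0 ≤ f i) (hg : ∀ i ∈ s, 0 ≤ g i) :
    ∑ i ∈ s, f i ^ θ * g i ^ θ' ≤ (∑ i ∈ s, f i) ^ θ * (∑ i ∈ s, g i) ^ θ' := by
  have hc : (1 / θ).HolderConjugate (1 / θ') := by
    rw [Real.holderConjugate_iff]
    constructor
    · rw [lt_div_iff₀ hθ]; linarith
    · simpa using hsum
  have h := Real.inner_le_Lp_mul_Lq_of_nonneg s hc (f := fun i => f i ^ θ)
    (g := fun i => g i ^ θ') (fun i hi => Real.rpow_nonneg (hf i hi) _)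
    (fun i hi => Real.rpow_nonneg (hg i hi) _)
  have e1 : ∑ i ∈ s, (f i ^ θ) ^ (1 / θ) = ∑ i ∈ s, f i :=
    Finset.sum_congr rfl fun i hi => by
      rw [← Real.rpow_mul (hf i hi), mul_one_div_cancel hθ.ne', Real.rpow_one]
  have e2 : ∑ i ∈ s, (g i ^ θ') ^ (1 / θ') = ∑ i ∈ s, g i :=
    Finset.sum_congr rfl fun i hi => by
      rw [← Real.rpow_mul (hg i hi), mul_one_div_cancel hθ'.ne', Real.rpow_one]
  rw [e1, e2, one_div_one_div, one_div_one_div] at h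
  exact h

theorem sum_rpow_mul_rpow_mul_rpow_le {ι : Type*} (s : Finset ι) {f g h : ι → ℝ}
    {θ₁ θ₂ θ₃ : ℝ} (hθ₁ : 0 < θ₁) (hθ₂ : 0 < θ₂) (hθ₃ : 0 < θ₃) (hsum : θ₁ + θ₂ + θ₃ = 1)
    (hf : ∀ i ∈ s, 0 ≤ f i) (hg : ∀ i ∈ s, 0 ≤ g i) (hh : ∀ i ∈ s, 0 ≤ h i) :
    ∑ i ∈ s, f i ^ θ₁ * (g i ^ θ₂ * h i ^ θ₃) ≤
      (∑ i ∈ s, f i) ^ θ₁ * ((∑ i ∈ s, g i) ^ θ₂ * (∑ i ∈ s, h i) ^ θ₃) := by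
  have hS : 0 < θ₂ + θ₃ := by linarith
  have hF : 0 ≤ ∑ i ∈ s, f i := Finset.sum_nonneg hf
  have key := sum_rpow_mul_rpow_le s (f := f)
    (g := fun i => g i ^ (θ₂ / (θ₂ + θ₃)) * h i ^ (θ₃ / (θ₂ + θ₃))) hθ₁ hS (by linarith) hf
    (fun i hi => mul_nonneg (Real.rpow_nonneg (hg i hi) _) (Real.rpow_nonneg (hh i hi) _))
  have key2 := sum_rpow_mul_rpow_le s (f := g) (g := h) (div_pos hθ₂ hS) (div_pos hθ₃ hS)
    (by field_simp) hg hh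
  have split : ∀ x y : ℝ, 0 ≤ x → 0 ≤ y →
      (x ^ (θ₂ / (θ₂ + θ₃)) * y ^ (θ₃ / (θ₂ + θ₃))) ^ (θ₂ + θ₃) = x ^ θ₂ * y ^ θ₃ := by
    intro x y hx hy
    rw [Real.mul_rpow (Real.rpow_nonneg hx _) (Real.rpow_nonneg hy _), ← Real.rpow_mul hx,
      ← Real.rpow_mul hy, div_mul_cancel₀ _ hS.ne', div_mul_cancel₀ _ hS.ne']
  rw [Finset.sum_congr rfl fun i hi => by rw [split _ _ (hg i hi) (hh i hi)]] at key
  refine key.trans (mul_le_mul_of_nonneg_left ?_ (Real.rpow_nonneg hF _))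
  rw [← split _ _ (Finset.sum_nonneg hg) (Finset.sum_nonneg hh)]
  exact Real.rpow_le_rpow (Finset.sum_nonneg fun i hi =>
    mul_nonneg (Real.rpow_nonneg (hg i hi) _) (Real.rpow_nonneg (hh i hi) _)) key2 hS.le

open Classical in
/-- The relative isoperimetric inequality on balls, averaged over all balls of a radius
comparable to `|A| ^ (1 / d)`, gives the global isoperimetric inequality of order `d`. -/
theorem isoperimetric {G : SimpleGraph V} {nbr : V → Finset V}
    (hnbr : ∀ x y, y ∈ nbr x ↔ G.Adj x y) {ball : V → ℝ → Finset V}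
    (hball : ∀ (x : V) (r : ℝ) (y : V), y ∈ ball x r ↔ (G.dist x y : ℝ) ≤ r)
    {d : ℕ} (hd : 2 ≤ d) {Creg Criso : ℝ} (hCreg : 0 < Creg) (hCriso : 0 < Criso)
    (hreg : ∀ (x : V) (r : ℝ), 1 ≤ r →
      Creg⁻¹ * r ^ d ≤ ((ball x r).card : ℝ) ∧ ((ball x r).card : ℝ) ≤ Creg * r ^ d)
    (hriso : ∀ (x : V) (r : ℝ) (A : Finset V), 1 ≤ r → A.Nonempty → A ⊆ ball x r →
      (A.card : ℝ) < ((ball x r).card : ℝ) / 2 →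
      Criso / r ≤ ((relBdry G (ball x r) A).card : ℝ) / (A.card : ℝ))
    (A : Finset V) (hA : A.Nonempty) :
    (A.card : ℝ) ^ (1 - 1 / (d : ℝ)) ≤
      Creg ^ 2 * (3 * Creg) ^ (1 / (d : ℝ)) / Criso *
        ∑ x ∈ A, (((nbr x).filter (· ∉ A)).card : ℝ) := by
  obtain ⟨x₁, hx₁⟩ := hA
  have hd0 : (0 : ℝ) < d := by exact_mod_cast (by omega : 0 < d)
  have hC1 : 1 ≤ Creg := by
    have h := hreg x₁ 1 le_rfl
    have h2 : Creg⁻¹ ≤ Creg := by simpa using h.1.trans h.2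
    rw [inv_le_iff_one_le_mul₀ hCreg] at h2
    nlinarith
  have hcard : (1 : ℝ) ≤ A.card := by
    exact_mod_cast Finset.card_pos.2 ⟨x₁, hx₁⟩
  obtain ⟨r, hr⟩ : ∃ r : ℝ, r = (3 * Creg * A.card) ^ (1 / (d : ℝ)) := ⟨_, rfl⟩
  have hr1 : 1 ≤ r := by
    rw [hr]; exact Real.one_le_rpow (by nlinarith) (by positivity)
  have hr0 : 0 < r := by linarith
  have hrd : r ^ d = 3 * Creg * A.card := by
    rw [hr, ← Real.rpow_natCast, ← Real.rpow_mul (by positivity), one_div_mul_cancel hd0.ne',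
      Real.rpow_one]
  have hsymm : ∀ x y, x ∈ ball y r ↔ y ∈ ball x r := fun x y => by
    rw [hball, hball, SimpleGraph.dist_comm]
  set D := A.filter fun z => ∃ y, y ∉ A ∧ G.Adj z y with hD
  set T := A.biUnion fun z => ball z r with hT
  have hloc : ∀ x ∈ T, Criso / r * ((A.filter (· ∈ ball x r)).card : ℝ) ≤
      ((D.filter (· ∈ ball x r)).card : ℝ) := by
    intro x hx
    obtain ⟨z, hz, hxz⟩ := Finset.mem_biUnion.1 hx
    have hne : (A.filter (· ∈ ball x r)).Nonempty :=
      ⟨z, Finset.mem_filter.2 ⟨hz, (hsymm _ _).1 hxz⟩⟩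
    have hlt : ((A.filter (· ∈ ball x r)).card : ℝ) < ((ball x r).card : ℝ) / 2 := by
      have h1 : ((A.filter (· ∈ ball x r)).card : ℝ) ≤ A.card := by
        exact_mod_cast Finset.card_filter_le _ _
      have h2 := (hreg x r hr1).1
      rw [hrd] at h2
      have h3 : Creg⁻¹ * (3 * Creg * A.card) = 3 * A.card := by field_simp
      linarith
    have h := hriso x r _ hr1 hne (fun y hy => (Finset.mem_filter.1 hy).2) hlt
    rw [le_div_iff₀ (by exact_mod_cast Finset.card_pos.2 hne)] at h
    refine h.trans ?_
    have hsub : relBdry G (ball x r) (A.filter (· ∈ ball x r)) ⊆ D.filter (· ∈ ball x r) := by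
      intro w hw
      simp only [relBdry, Finset.mem_filter, hD] at hw ⊢
      obtain ⟨⟨hwA, hwB⟩, y, hy, hyn, hadj⟩ := hw
      exact ⟨⟨hwA, y, fun hyA => hyn ⟨hyA, hy⟩, hadj⟩, hwB⟩
    exact_mod_cast Finset.card_le_card hsub
  have hcount : ∀ E : Finset V, ∑ x ∈ T, ((E.filter (· ∈ ball x r)).card : ℝ)
      = ∑ z ∈ E, ((T.filter (· ∈ ball z r)).card : ℝ) := by
    intro E
    simp only [Finset.card_filter, Nat.cast_sum]
    rw [Finset.sum_comm]
    refine Finset.sum_congr rfl fun z _ => Finset.sum_congr rfl fun x _ => ?_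
    simp only [hsymm z x]
  have hlow : (A.card : ℝ) * (Creg⁻¹ * r ^ d) ≤
      ∑ x ∈ T, ((A.filter (· ∈ ball x r)).card : ℝ) := by
    rw [hcount, ← nsmul_eq_mul]
    refine Finset.card_nsmul_le_sum _ _ _ fun z hz => (hreg z r hr1).1.trans ?_
    have : ball z r ⊆ T.filter (· ∈ ball z r) := fun y hy =>
      Finset.mem_filter.2 ⟨Finset.mem_biUnion.2 ⟨z, hz, hy⟩, hy⟩
    exact_mod_cast Finset.card_le_card this
  have hupp : ∑ x ∈ T, ((D.filter (· ∈ ball x r)).card : ℝ) ≤ D.card * (Creg * r ^ d) := by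
    rw [hcount, ← nsmul_eq_mul]
    refine Finset.sum_le_card_nsmul _ _ _ fun z _ => le_trans ?_ (hreg z r hr1).2
    have : T.filter (· ∈ ball z r) ⊆ ball z r := fun y hy => (Finset.mem_filter.1 hy).2
    exact_mod_cast Finset.card_le_card this
  have hmain : Criso / r * (A.card * (Creg⁻¹ * r ^ d)) ≤ D.card * (Creg * r ^ d) := by
    refine le_trans (mul_le_mul_of_nonneg_left hlow (by positivity)) ?_
    rw [Finset.mul_sum]
    exact (Finset.sum_le_sum hloc).trans hupp
  have hDle : (D.card : ℝ) ≤ ∑ x ∈ A, (((nbr x).filter (· ∉ A)).card : ℝ) := by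
    rw [hD, Finset.card_filter, Nat.cast_sum]
    refine Finset.sum_le_sum fun x _ => ?_
    split_ifs with h
    · obtain ⟨y, hy, hxy⟩ := h
      have : 0 < ((nbr x).filter (· ∉ A)).card :=
        Finset.card_pos.2 ⟨y, Finset.mem_filter.2 ⟨(hnbr _ _).2 hxy, hy⟩⟩
      exact_mod_cast this
    · simp
  have hfin : (A.card : ℝ) ≤ Creg ^ 2 / Criso * r * D.card := by
    have hrd0 : 0 < r ^ d := by positivity
    have h : Criso / r * (A.card * Creg⁻¹) ≤ D.card * Creg := by
      refine le_of_mul_le_mul_right ?_ hrd0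
      calc _ = Criso / r * (A.card * (Creg⁻¹ * r ^ d)) := by ring
        _ ≤ _ := hmain
        _ = _ := by ring
    calc (A.card : ℝ) = Creg * r / Criso * (Criso / r * (A.card * Creg⁻¹)) := by field_simp
      _ ≤ Creg * r / Criso * (D.card * Creg) := mul_le_mul_of_nonneg_left h (by positivity)
      _ = _ := by ring
  have hpow : (A.card : ℝ) ^ (1 - 1 / (d : ℝ)) = A.card / (A.card : ℝ) ^ (1 / (d : ℝ)) := by
    rw [Real.rpow_sub (by linarith), Real.rpow_one]
  rw [hpow, div_le_iff₀ (Real.rpow_pos_of_pos (by linarith) _)]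
  refine hfin.trans ?_
  have hr' : r = (3 * Creg) ^ (1 / (d : ℝ)) * (A.card : ℝ) ^ (1 / (d : ℝ)) := by
    rw [hr, Real.mul_rpow (by positivity) (by positivity)]
  calc Creg ^ 2 / Criso * r * D.card
      ≤ Creg ^ 2 / Criso * r * ∑ x ∈ A, (((nbr x).filter (· ∉ A)).card : ℝ) :=
        mul_le_mul_of_nonneg_left hDle (by positivity)
    _ = _ := by rw [hr']; ring

open Classical in
theorem sobolev_one_of_pos {nbr : V → Finset V} {C s : ℝ} (hs : 1 ≤ s) (hC : 0 ≤ C)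
    (hiso : ∀ A : Finset V, A.Nonempty →
      (A.card : ℝ) ^ (1 / s) ≤ C * ∑ x ∈ A, (((nbr x).filter (· ∉ A)).card : ℝ))
    (A : Finset V) :
    ∀ f : V → ℝ, (∀ x ∈ A, 0 < f x) → (∀ x, x ∉ A → f x = 0) →
    (∑ x ∈ A, f x ^ s) ^ (1 / s) ≤ C * ∑ x ∈ A, ∑ y ∈ nbr x, max 0 (f x - f y) := by
  have hs0 : 0 < s := by linarith
  induction A using Finset.strongInduction with
  | H A ih =>
  intro f hpos hzero
  rcases A.eq_empty_or_nonempty with rfl | hA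
  · simp [Real.zero_rpow (inv_pos.2 hs0).ne']
  obtain ⟨z, hz, hmin⟩ := Finset.exists_min_image A f hA
  set m := f z
  have hm : 0 < m := hpos z hz
  set g : V → ℝ := fun x => if x ∈ A then f x - m else 0 with hg
  set A' := A.filter fun x => m < f x with hA'
  have hg0 : ∀ x, 0 ≤ g x := fun x => by
    simp only [hg]; split_ifs with h
    · linarith [hmin x h]
    · exact le_rfl
  have hgA' : ∀ x, x ∉ A' → g x = 0 := fun x hx => by
    simp only [hg]; split_ifs with h
    · have : ¬ m < f x := fun hlt => hx (Finset.mem_filter.2 ⟨h, hlt⟩)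
      linarith [hmin x h]
    · rfl
  have hsub : A' ⊂ A := by
    rw [Finset.ssubset_iff_of_subset (Finset.filter_subset _ _)]
    exact ⟨z, hz, fun h => lt_irrefl _ (Finset.mem_filter.1 h).2⟩
  have hIH := ih A' hsub g (fun x hx => by
    have hx' := Finset.mem_filter.1 hx
    simp only [hg, if_pos hx'.1]; linarith [hx'.2]) hgA'
  have e1 : ∑ x ∈ A', g x ^ s = ∑ x ∈ A, g x ^ s :=
    Finset.sum_subset hsub.1 fun x _ hx => by rw [hgA' x hx, Real.zero_rpow hs0.ne']
  have e2 : ∑ x ∈ A', ∑ y ∈ nbr x, max 0 (g x - g y)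
      = ∑ x ∈ A, ∑ y ∈ nbr x, max 0 (g x - g y) :=
    Finset.sum_subset hsub.1 fun x _ hx => Finset.sum_eq_zero fun y _ => by
      rw [hgA' x hx]; exact max_eq_left (by linarith [hg0 y])
  rw [e1, e2] at hIH
  have hmink := Real.Lp_add_le_of_nonneg A hs (f := fun _ => m) (g := g) (fun _ _ => hm.le)
    (fun x _ => hg0 x)
  have e3 : ∑ x ∈ A, (m + g x) ^ s = ∑ x ∈ A, f x ^ s :=
    Finset.sum_congr rfl fun x hx => by simp only [hg, if_pos hx]; congr 1; ring
  have e4 : (∑ _x ∈ A, m ^ s) ^ (1 / s) = m * (A.card : ℝ) ^ (1 / s) := by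
    rw [Finset.sum_const, nsmul_eq_mul, Real.mul_rpow (by positivity) (by positivity),
      ← Real.rpow_mul hm.le, mul_one_div_cancel hs0.ne', Real.rpow_one, mul_comm]
  rw [e3, e4] at hmink
  refine hmink.trans ((add_le_add (mul_le_mul_of_nonneg_left (hiso A hA) hm.le) hIH).trans ?_)
  have e5 : m * (C * ∑ x ∈ A, (((nbr x).filter (· ∉ A)).card : ℝ)) +
      C * ∑ x ∈ A, ∑ y ∈ nbr x, max 0 (g x - g y) =
      C * (∑ x ∈ A, (m * (((nbr x).filter (· ∉ A)).card : ℝ) +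
        ∑ y ∈ nbr x, max 0 (g x - g y))) := by
    rw [Finset.sum_add_distrib, ← Finset.mul_sum]; ring
  rw [e5]
  refine mul_le_mul_of_nonneg_left (Finset.sum_le_sum fun x hx => ?_) hC
  rw [Finset.card_filter, Nat.cast_sum, Finset.mul_sum, ← Finset.sum_add_distrib]
  refine Finset.sum_le_sum fun y _ => ?_
  by_cases hy : y ∈ A
  · simp [hg, hx, hy]
  · have := hmin x hx
    simp only [hg, hx, hy, hzero y hy, if_true, if_false, not_false_eq_true, Nat.cast_one,
      mul_one, sub_zero]
    rw [max_eq_right (by linarith : (0 : ℝ) ≤ f x - m)]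
    exact (by ring_nf; exact le_max_right _ _)

open Classical in
/-- An isoperimetric inequality implies the `ℓ¹` Sobolev inequality. -/
theorem sobolev_one {nbr : V → Finset V} {C s : ℝ} (hs : 1 ≤ s) (hC : 0 ≤ C)
    (hiso : ∀ A : Finset V, A.Nonempty →
      (A.card : ℝ) ^ (1 / s) ≤ C * ∑ x ∈ A, (((nbr x).filter (· ∉ A)).card : ℝ))
    (A : Finset V) (f : V → ℝ) (hf : ∀ x, 0 ≤ f x) (hzero : ∀ x, x ∉ A → f x = 0) :
    (∑ x ∈ A, f x ^ s) ^ (1 / s) ≤ C * ∑ x ∈ A, ∑ y ∈ nbr x, max 0 (f x - f y) := by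
  have hz : ∀ x, x ∉ A.filter (fun x => 0 < f x) → f x = 0 := fun x hx => by
    by_cases h : x ∈ A
    · have : ¬ 0 < f x := fun hlt => hx (Finset.mem_filter.2 ⟨h, hlt⟩)
      linarith [hf x]
    · exact hzero x h
  have h := sobolev_one_of_pos hs hC hiso (A.filter fun x => 0 < f x) f
    (fun x hx => (Finset.mem_filter.1 hx).2) hz
  have hs0 : s ≠ 0 := by linarith
  rwa [Finset.sum_subset (Finset.filter_subset _ _) fun x _ hx => by
      rw [hz x hx, Real.zero_rpow hs0],
    Finset.sum_subset (Finset.filter_subset _ _) fun x _ hx => Finset.sum_eq_zero fun y _ => by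
      rw [hz x hx]; exact max_eq_left (by linarith [hf y])] at h

theorem rpow_sub_rpow_le {a b τ : ℝ} (ha : 0 ≤ a) (hb : 0 ≤ b) (hτ : 1 < τ) :
    a ^ τ - b ^ τ ≤ τ * (a ^ (τ - 1) * |a - b|) := by
  rcases ha.eq_or_lt with rfl | ha
  · rw [Real.zero_rpow (by linarith), Real.zero_rpow (by linarith)]
    simpa using Real.rpow_nonneg hb τ
  · have h := one_add_mul_self_le_rpow_one_add (s := b / a - 1)
      (by linarith [div_nonneg hb ha.le]) hτ.le
    rw [add_sub_cancel, Real.div_rpow hb ha.le, le_div_iff₀ (Real.rpow_pos_of_pos ha _)] at h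
    have e : a ^ τ = a ^ (τ - 1) * a := by rw [Real.rpow_sub_one ha.ne']; field_simp
    have h2 : a ^ τ - b ^ τ ≤ τ * (a ^ (τ - 1) * (a - b)) := by
      have : τ * (a ^ (τ - 1) * (a - b)) = a ^ τ - (1 + τ * (b / a - 1)) * a ^ τ := by
        rw [e]; field_simp; ring
      linarith
    refine h2.trans (mul_le_mul_of_nonneg_left (mul_le_mul_of_nonneg_left (le_abs_self _)
      (Real.rpow_nonneg ha.le _)) (by linarith))

open Classical in
/-- Weighted Sobolev inequality for finitely supported functions: the Dirichlet energy with
conductances `ω` controls the `ℓ^ρ` norm of `g²`, up to the `ℓ^q` norm of `ν^ω`. -/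
theorem sobolev_weighted {G : SimpleGraph V} {nbr : V → Finset V}
    (hnbr : ∀ x y, y ∈ nbr x ↔ G.Adj x y) {ω : V → V → ℝ}
    (hpos : ∀ x y, G.Adj x y → 0 < ω x y) {C s q ρ : ℝ} (hs : 1 ≤ s) (hC : 0 ≤ C)
    (hq : 1 < q) (hρ : 0 < ρ) (hρs : 1 / ρ = 2 / s - 1 + 1 / q)
    (hiso : ∀ A : Finset V, A.Nonempty →
      (A.card : ℝ) ^ (1 / s) ≤ C * ∑ x ∈ A, (((nbr x).filter (· ∉ A)).card : ℝ))
    (A : Finset V) (g : V → ℝ) (hg : ∀ x, 0 ≤ g x) (hzero : ∀ x, x ∉ A → g x = 0) :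
    (∑ x ∈ A, g x ^ (2 * ρ)) ^ (1 / ρ) ≤
      (C * (2 * ρ / s)) ^ 2 * (∑ x ∈ A, nu nbr ω x ^ q) ^ (1 / q) *
        ∑ x ∈ A, ∑ y ∈ nbr x, ω x y * (g x - g y) ^ 2 := by
  have hs0 : 0 < s := by linarith
  have hq0 : 0 < q := by linarith
  have hθ : 0 < 1 - 1 / q := by
    have : 1 / q < 1 := (div_lt_one hq0).2 hq
    linarith
  set τ := 2 * ρ / s with hτ
  have hτ1 : τ - 1 = ρ * (1 - 1 / q) := by
    have : ρ * (1 / ρ) = 1 := by field_simp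
    rw [hρs] at this
    have e : τ = ρ * (2 / s) := by rw [hτ]; ring
    rw [e]; nlinarith
  have hτ' : 1 < τ := by
    have : 0 < ρ * (1 - 1 / q) := mul_pos hρ hθ
    linarith
  have hω : ∀ x, ∀ y ∈ nbr x, 0 < ω x y := fun x y hy => hpos x y ((hnbr x y).1 hy)
  have hnu : ∀ x, 0 ≤ nu nbr ω x := fun x =>
    Finset.sum_nonneg fun y hy => (inv_pos.2 (hω x y hy)).le
  set X := ∑ x ∈ A, g x ^ (2 * ρ) with hX
  set E := ∑ x ∈ A, ∑ y ∈ nbr x, ω x y * (g x - g y) ^ 2 with hE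
  set N := (∑ x ∈ A, nu nbr ω x ^ q) ^ (1 / q) with hN
  have hE0 : 0 ≤ E := Finset.sum_nonneg fun x _ => Finset.sum_nonneg fun y hy =>
    mul_nonneg (hω x y hy).le (sq_nonneg _)
  have hN0 : 0 ≤ N := Real.rpow_nonneg (Finset.sum_nonneg fun x _ =>
    Real.rpow_nonneg (hnu x) _) _
  have hX0 : 0 ≤ X := Finset.sum_nonneg fun x _ => Real.rpow_nonneg (hg x) _
  rcases hX0.eq_or_lt with hX0 | hXpos
  · rw [← hX0, Real.zero_rpow (by positivity)]
    positivity
  have hsob := sobolev_one hs hC hiso A (fun x => g x ^ τ) (fun x => Real.rpow_nonneg (hg x) _)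
    (fun x hx => by rw [hzero x hx, Real.zero_rpow (by linarith)])
  have e1 : ∑ x ∈ A, (g x ^ τ) ^ s = X := Finset.sum_congr rfl fun x _ => by
    rw [← Real.rpow_mul (hg x), hτ, div_mul_cancel₀ _ hs0.ne']
  rw [e1] at hsob
  set R := ∑ x ∈ A, ∑ y ∈ nbr x, g x ^ (τ - 1) * |g x - g y| with hR
  have h1 : ∑ x ∈ A, ∑ y ∈ nbr x, max 0 (g x ^ τ - g y ^ τ) ≤ τ * R := by
    rw [hR, Finset.mul_sum]
    refine Finset.sum_le_sum fun x _ => ?_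
    rw [Finset.mul_sum]
    refine Finset.sum_le_sum fun y _ => max_le ?_ (rpow_sub_rpow_le (hg x) (hg y) hτ')
    exact mul_nonneg (by linarith) (mul_nonneg (Real.rpow_nonneg (hg x) _) (abs_nonneg _))
  have h2 : R ^ 2 ≤ (∑ x ∈ A, g x ^ (2 * (τ - 1)) * nu nbr ω x) * E := by
    have e : ∑ x ∈ A, g x ^ (2 * (τ - 1)) * nu nbr ω x =
        ∑ x ∈ A, ∑ y ∈ nbr x, g x ^ (2 * (τ - 1)) * (ω x y)⁻¹ :=
      Finset.sum_congr rfl fun x _ => by rw [nu, Finset.mul_sum]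
    rw [e, hR, hE, Finset.sum_sigma', Finset.sum_sigma', Finset.sum_sigma']
    refine Finset.sum_sq_le_sum_mul_sum_of_sq_le_mul _ ?_ ?_ ?_
    · rintro ⟨x, y⟩ hxy
      have := hω x y (Finset.mem_sigma.1 hxy).2
      exact mul_nonneg (Real.rpow_nonneg (hg x) _) (inv_pos.2 this).le
    · rintro ⟨x, y⟩ hxy
      have := hω x y (Finset.mem_sigma.1 hxy).2
      exact mul_nonneg this.le (sq_nonneg _)
    · rintro ⟨x, y⟩ hxy
      have := hω x y (Finset.mem_sigma.1 hxy).2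
      have e2 : g x ^ (2 * (τ - 1)) = (g x ^ (τ - 1)) ^ 2 := by
        rw [mul_comm, Real.rpow_mul (hg x)]; norm_cast
      refine le_of_eq ?_
      simp only [e2, mul_pow, sq_abs]
      field_simp
  have h3 : ∑ x ∈ A, g x ^ (2 * (τ - 1)) * nu nbr ω x ≤ X ^ (1 - 1 / q) * N := by
    have := sum_rpow_mul_rpow_le A (f := fun x => g x ^ (2 * ρ)) (g := fun x => nu nbr ω x ^ q)
      hθ (one_div_pos.2 hq0) (by ring) (fun x _ => Real.rpow_nonneg (hg x) _)
      (fun x _ => Real.rpow_nonneg (hnu x) _)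
    refine le_trans (le_of_eq (Finset.sum_congr rfl fun x _ => ?_)) this
    rw [← Real.rpow_mul (hg x), ← Real.rpow_mul (hnu x), mul_one_div_cancel hq0.ne',
      Real.rpow_one, hτ1]
    congr 2; ring
  have hXs : 0 ≤ X ^ (1 / s) := Real.rpow_nonneg hXpos.le _
  have h4 : X ^ (1 / s) ≤ C * (τ * R) := hsob.trans (mul_le_mul_of_nonneg_left h1 hC)
  have h5 : (X ^ (1 / s)) ^ 2 ≤ (C * τ) ^ 2 * (X ^ (1 - 1 / q) * N * E) :=
    calc (X ^ (1 / s)) ^ 2 ≤ (C * (τ * R)) ^ 2 := pow_le_pow_left₀ hXs h4 2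
      _ = (C * τ) ^ 2 * R ^ 2 := by ring
      _ ≤ (C * τ) ^ 2 * (X ^ (1 - 1 / q) * N * E) :=
        mul_le_mul_of_nonneg_left (h2.trans (mul_le_mul_of_nonneg_right h3 hE0)) (sq_nonneg _)
  have e6 : (X ^ (1 / s)) ^ 2 = X ^ (1 / ρ) * X ^ (1 - 1 / q) := by
    rw [← Real.rpow_natCast, ← Real.rpow_mul hXpos.le, ← Real.rpow_add hXpos, hρs]
    congr 1; push_cast; ring
  rw [e6] at h5
  refine le_of_mul_le_mul_right (h5.trans (le_of_eq ?_))
    (Real.rpow_pos_of_pos hXpos (1 - 1 / q))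
  ring

open Classical in
/-- Caccioppoli-type lower bound, at a fixed time, for a positive function `u` tested against
`η² u ^ (γ - 1)`. -/
theorem energy_le_sum_test {G : SimpleGraph V} {nbr : V → Finset V}
    (hnbr : ∀ x y, y ∈ nbr x ↔ G.Adj x y) {ω : V → V → ℝ} (hsymm : ∀ x y, ω x y = ω y x)
    (hpos : ∀ x y, G.Adj x y → 0 < ω x y) (hnull : ∀ x y, ¬ G.Adj x y → ω x y = 0)
    {γ L : ℝ} (hγ : 0 < γ) (hγ' : γ ≤ 1 / 2) {u η : V → ℝ} (hu : ∀ x, 0 < u x)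
    (hη : ∀ x, 0 ≤ η x) {A : Finset V} (hηA : ∀ x, x ∉ A → η x = 0)
    (hηL : ∀ x y, G.Adj x y → |η x - η y| ≤ L) :
    ∑ x ∈ A, ∑ y ∈ nbr x, ω x y * (η x * u x ^ (γ / 2) - η y * u y ^ (γ / 2)) ^ 2
        - 84 * L ^ 2 * ∑ x ∈ A, u x ^ γ * mu nbr ω x ≤
      8 * ∑ x ∈ A, γ * η x ^ 2 * u x ^ (γ - 1) * ∑ y ∈ nbr x, ω x y * (u y - u x) := by
  set S := A ∪ A.biUnion nbr with hS
  have hAS : A ⊆ S := Finset.subset_union_left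
  have hω : ∀ x y, 0 ≤ ω x y := fun x y => by
    by_cases h : G.Adj x y
    · exact (hpos x y h).le
    · exact (hnull x y h).ge
  have hconv : ∀ x ∈ A, ∀ φ : V → ℝ, ∑ y ∈ S, ω x y * φ y = ∑ y ∈ nbr x, ω x y * φ y := by
    intro x hx φ
    refine (Finset.sum_subset (fun y hy => Finset.mem_union_right _
      (Finset.mem_biUnion.2 ⟨x, hx, hy⟩)) fun y _ hy => ?_).symm
    rw [hnull x y fun h => hy ((hnbr x y).2 h), zero_mul]
  set D : V → ℝ := fun x => η x ^ 2 * u x ^ (γ - 1) with hD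
  set I : V → ℝ := fun x => if 0 < η x then u x ^ γ else 0 with hI
  have hI0 : ∀ x, 0 ≤ I x := fun x => by
    simp only [hI]; split_ifs
    · exact Real.rpow_nonneg (hu x).le _
    · exact le_rfl
  have hIu : ∀ x, I x ≤ u x ^ γ := fun x => by
    simp only [hI]; split_ifs
    · exact le_rfl
    · exact Real.rpow_nonneg (hu x).le _
  have hIA : ∀ x, x ∉ A → I x = 0 := fun x hx => by simp [hI, hηA x hx]
  have hL0 : ∀ x y, ω x y * (η x - η y) ^ 2 ≤ ω x y * L ^ 2 := fun x y => by
    by_cases h : G.Adj x y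
    · refine mul_le_mul_of_nonneg_left ?_ (hω x y)
      rw [← sq_abs]; exact pow_le_pow_left₀ (abs_nonneg _) (hηL x y h) 2
    · simp [hnull x y h]
  have hedge : ∀ x y, ω x y * (η x * u x ^ (γ / 2) - η y * u y ^ (γ / 2)) ^ 2
      - 42 * L ^ 2 * (ω x y * (I x + I y)) ≤
      4 * γ * (ω x y * (D x * (u y - u x)) + ω x y * (D y * (u x - u y))) := by
    intro x y
    have h := mul_le_mul_of_nonneg_left
      (edge_energy hγ hγ' (hu x) (hu y) (hη x) (hη y)) (hω x y)
    have h' := mul_le_mul_of_nonneg_right (hL0 x y) (add_nonneg (hI0 x) (hI0 y))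
    simp only [hI] at h' ⊢
    simp only [hD]
    nlinarith
  have hsum := Finset.sum_le_sum fun x (_ : x ∈ S) => Finset.sum_le_sum fun y (_ : y ∈ S) =>
    hedge x y
  simp only [Finset.sum_sub_distrib, ← Finset.mul_sum, Finset.sum_add_distrib, mul_add] at hsum
  have s1 : ∑ x ∈ S, ∑ y ∈ S, ω x y * (D y * (u x - u y))
      = ∑ x ∈ S, ∑ y ∈ S, ω x y * (D x * (u y - u x)) := by
    rw [Finset.sum_comm]
    exact Finset.sum_congr rfl fun x _ => Finset.sum_congr rfl fun y _ => by rw [hsymm y x]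
  have s2 : ∑ x ∈ S, ∑ y ∈ S, ω x y * I y = ∑ x ∈ S, ∑ y ∈ S, ω x y * I x := by
    rw [Finset.sum_comm]
    exact Finset.sum_congr rfl fun x _ => Finset.sum_congr rfl fun y _ => by rw [hsymm y x]
  have s3 : ∑ x ∈ S, ∑ y ∈ S, ω x y * (D x * (u y - u x))
      = ∑ x ∈ A, η x ^ 2 * u x ^ (γ - 1) * ∑ y ∈ nbr x, ω x y * (u y - u x) := by
    rw [← Finset.sum_subset hAS fun x _ hx => Finset.sum_eq_zero fun y _ => by
      simp [hD, hηA x hx]]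
    refine Finset.sum_congr rfl fun x hx => ?_
    rw [hconv x hx, Finset.mul_sum]
    exact Finset.sum_congr rfl fun y _ => by simp only [hD]; ring
  have s4 : ∑ x ∈ S, ∑ y ∈ S, ω x y * I x ≤ ∑ x ∈ A, u x ^ γ * mu nbr ω x := by
    rw [← Finset.sum_subset hAS fun x _ hx => Finset.sum_eq_zero fun y _ => by
      rw [hIA x hx, mul_zero]]
    refine Finset.sum_le_sum fun x hx => ?_
    rw [hconv x hx fun _ => I x, ← Finset.sum_mul, mul_comm]
    exact mul_le_mul_of_nonneg_right (hIu x) (Finset.sum_nonneg fun y _ => hω x y)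
  have s5 : ∑ x ∈ A, ∑ y ∈ nbr x, ω x y * (η x * u x ^ (γ / 2) - η y * u y ^ (γ / 2)) ^ 2 ≤
      ∑ x ∈ S, ∑ y ∈ S, ω x y * (η x * u x ^ (γ / 2) - η y * u y ^ (γ / 2)) ^ 2 := by
    rw [← Finset.sum_congr rfl fun x hx => hconv x hx _]
    exact Finset.sum_le_sum_of_subset_of_nonneg hAS fun x _ _ => Finset.sum_nonneg fun y _ =>
      mul_nonneg (hω x y) (sq_nonneg _)
  have s6 : ∑ x ∈ A, γ * η x ^ 2 * u x ^ (γ - 1) * ∑ y ∈ nbr x, ω x y * (u y - u x)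
      = γ * ∑ x ∈ A, η x ^ 2 * u x ^ (γ - 1) * ∑ y ∈ nbr x, ω x y * (u y - u x) := by
    rw [Finset.mul_sum]; exact Finset.sum_congr rfl fun x _ => by ring
  rw [s1, s2, s3] at hsum
  rw [s6]
  have s7 := mul_le_mul_of_nonneg_left s4 (by positivity : 0 ≤ 84 * L ^ 2)
  linarith

/-- `Σ_{x ∈ A} u(t,x)^γ μ^ω(x)`. -/
def mass (nbr : V → Finset V) (ω : V → V → ℝ) (γ : ℝ) (A : Finset V) (u : ℝ → V → ℝ)
    (t : ℝ) : ℝ :=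
  ∑ x ∈ A, u t x ^ γ * mu nbr ω x

/-- `Σ_{x ∈ A} η(x)² u(t,x)^γ μ^ω(x)`. -/
def cutMass (nbr : V → Finset V) (ω : V → V → ℝ) (γ : ℝ) (A : Finset V) (η : V → ℝ)
    (u : ℝ → V → ℝ) (t : ℝ) : ℝ :=
  ∑ x ∈ A, η x ^ 2 * u t x ^ γ * mu nbr ω x

/-- Dirichlet energy of `η u(t,·)^{γ/2}` over the ordered edges starting in `A`. -/
def cutEnergy (nbr : V → Finset V) (ω : V → V → ℝ) (γ : ℝ) (A : Finset V) (η : V → ℝ)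
    (u : ℝ → V → ℝ) (t : ℝ) : ℝ :=
  ∑ x ∈ A, ∑ y ∈ nbr x, ω x y * (η x * u t x ^ (γ / 2) - η y * u t y ^ (γ / 2)) ^ 2

theorem SuperCaloric.mono {nbr : V → Finset V} {ω : V → V → ℝ} {I I' : Set ℝ} {B B' : Set V}
    {u : ℝ → V → ℝ} (h : SuperCaloric nbr ω I B u) (hI : I' ⊆ I) (hB : B' ⊆ B) :
    SuperCaloric nbr ω I' B' u :=
  fun x hx t ht => h x (hB hx) t (hI ht)

theorem SuperCaloric.continuousOn {nbr : V → Finset V} {ω : V → V → ℝ} {I : Set ℝ} {B : Set V}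
    {u : ℝ → V → ℝ} (h : SuperCaloric nbr ω I B u) {x : V} (hx : x ∈ B) :
    ContinuousOn (fun t => u t x) I := fun t ht => by
  obtain ⟨_, hd, _⟩ := h x hx t ht
  exact hd.continuousAt.continuousWithinAt

theorem SuperCaloric.continuousOn_mass {nbr : V → Finset V} {ω : V → V → ℝ} {I : Set ℝ}
    {A : Finset V} {u : ℝ → V → ℝ} (h : SuperCaloric nbr ω I (A : Set V) u)
    (hu : ∀ t ∈ I, ∀ x, 0 < u t x) (γ : ℝ) : ContinuousOn (mass nbr ω γ A u) I :=
  continuousOn_finsetSum _ fun _ hx =>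
    ((h.continuousOn hx).rpow_const fun t ht => Or.inl (hu t ht _).ne').mul continuousOn_const

theorem SuperCaloric.continuousOn_cutEnergy {nbr : V → Finset V} {ω : V → V → ℝ} {I : Set ℝ}
    {A : Finset V} {u : ℝ → V → ℝ} (h : SuperCaloric nbr ω I (A : Set V) u)
    (hu : ∀ t ∈ I, ∀ x, 0 < u t x) (γ : ℝ) {η : V → ℝ} (hηA : ∀ x, x ∉ A → η x = 0) :
    ContinuousOn (cutEnergy nbr ω γ A η u) I := by
  have hc : ∀ x, ContinuousOn (fun t => η x * u t x ^ (γ / 2)) I := fun x => by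
    by_cases hx : x ∈ A
    · exact continuousOn_const.mul
        ((h.continuousOn hx).rpow_const fun t ht => Or.inl (hu t ht _).ne')
    · simp only [hηA x hx, zero_mul]; exact continuousOn_const
  exact continuousOn_finsetSum _ fun x _ => continuousOn_finsetSum _ fun y _ =>
    continuousOn_const.mul (((hc x).sub (hc y)).pow 2)

/-- Energy estimate for positive super-caloric functions, with the linear time cutoff `T - s`. -/
theorem SuperCaloric.energy_estimate {G : SimpleGraph V} {nbr : V → Finset V}
    (hnbr : ∀ x y, y ∈ nbr x ↔ G.Adj x y) {ω : V → V → ℝ} (hsymm : ∀ x y, ω x y = ω y x)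
    (hpos : ∀ x y, G.Adj x y → 0 < ω x y) (hnull : ∀ x y, ¬ G.Adj x y → ω x y = 0)
    (hmu : ∀ x, 0 < mu nbr ω x)
    {γ L R : ℝ} (hγ : 0 < γ) (hγ' : γ ≤ 1 / 2) {u : ℝ → V → ℝ} {η : V → ℝ}
    (hη : ∀ x, 0 ≤ η x) (hη1 : ∀ x, η x ≤ 1) {A : Finset V} (hηA : ∀ x, x ∉ A → η x = 0)
    (hηL : ∀ x y, G.Adj x y → |η x - η y| ≤ L)
    {t T : ℝ} (htT : t ≤ T) (hR : T - t ≤ R) (hu : ∀ s ∈ Set.Icc t T, ∀ x, 0 < u s x)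
    (hsuper : SuperCaloric nbr ω (Set.Icc t T) (A : Set V) u) :
    (T - t) * (8 * cutMass nbr ω γ A η u t) + ∫ s in t..T, (T - s) * cutEnergy nbr ω γ A η u s ≤
      (8 + 84 * L ^ 2 * R) * ∫ s in t..T, mass nbr ω γ A u s := by
  set K := 8 + 84 * L ^ 2 * R
  have hcE := hsuper.continuousOn_cutEnergy hu γ hηA
  have hcM := hsuper.continuousOn_mass hu γ
  have hcTE : ContinuousOn (fun s => (T - s) * cutEnergy nbr ω γ A η u s) (Set.Icc t T) :=
    (continuousOn_const.sub continuousOn_id).mul hcE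
  have hcKM : ContinuousOn (fun s => K * mass nbr ω γ A u s) (Set.Icc t T) :=
    continuousOn_const.mul hcM
  have hderiv : ∀ s ∈ Set.Icc t T, HasDerivAt
      (fun s => (T - s) * (8 * cutMass nbr ω γ A η u s))
      (-1 * (8 * cutMass nbr ω γ A η u s) + (T - s) * (8 * ∑ x ∈ A, η x ^ 2 *
        (deriv (fun s => u s x) s * γ * u s x ^ (γ - 1)) * mu nbr ω x)) s := by
    intro s hs
    have hF : HasDerivAt (cutMass nbr ω γ A η u) (∑ x ∈ A, η x ^ 2 *
        (deriv (fun s => u s x) s * γ * u s x ^ (γ - 1)) * mu nbr ω x) s := by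
      refine HasDerivAt.fun_sum fun x hx => ?_
      obtain ⟨e, he, _⟩ := hsuper x hx s hs
      rw [he.deriv]
      exact ((he.rpow_const (Or.inl (hu s hs x).ne')).const_mul _).mul_const _
    exact ((hasDerivAt_id s).const_sub T).mul (hF.const_mul 8)
  have hlow : ∀ s ∈ Set.Icc t T,
      (T - s) * cutEnergy nbr ω γ A η u s - K * mass nbr ω γ A u s ≤
      -1 * (8 * cutMass nbr ω γ A η u s) + (T - s) * (8 * ∑ x ∈ A, η x ^ 2 *
        (deriv (fun s => u s x) s * γ * u s x ^ (γ - 1)) * mu nbr ω x) := by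
    intro s hs
    have h1 := energy_le_sum_test hnbr hsymm hpos hnull hγ hγ' (hu s hs) hη hηA hηL
    have h2 : ∑ x ∈ A, γ * η x ^ 2 * u s x ^ (γ - 1) * ∑ y ∈ nbr x, ω x y * (u s y - u s x) ≤
        ∑ x ∈ A, η x ^ 2 * (deriv (fun s => u s x) s * γ * u s x ^ (γ - 1)) * mu nbr ω x := by
      refine Finset.sum_le_sum fun x hx => ?_
      obtain ⟨e, he, hle⟩ := hsuper x hx s hs
      rw [he.deriv]
      have h3 : ∑ y ∈ nbr x, ω x y * (u s y - u s x) ≤ mu nbr ω x * e := by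
        have := mul_le_mul_of_nonneg_left hle (hmu x).le
        rwa [lap, mul_inv_cancel_left₀ (hmu x).ne'] at this
      refine (mul_le_mul_of_nonneg_left h3 ?_).trans (le_of_eq (by ring))
      exact mul_nonneg (by positivity) (Real.rpow_nonneg (hu s hs x).le _)
    have h4 : cutMass nbr ω γ A η u s ≤ mass nbr ω γ A u s := by
      refine Finset.sum_le_sum fun x _ => mul_le_mul_of_nonneg_right ?_ (hmu x).le
      have hη2 : η x ^ 2 ≤ 1 := pow_le_one₀ (hη x) (hη1 x)
      simpa using mul_le_mul_of_nonneg_right hη2 (Real.rpow_nonneg (hu s hs x).le γ)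
    have hM0 : 0 ≤ mass nbr ω γ A u s := Finset.sum_nonneg fun x _ =>
      mul_nonneg (Real.rpow_nonneg (hu s hs x).le γ) (hmu x).le
    have hTs : 0 ≤ T - s := by linarith [hs.2]
    have hTR : T - s ≤ R := by linarith [hs.1]
    have h5 := mul_le_mul_of_nonneg_left (h1.trans (mul_le_mul_of_nonneg_left h2 (by norm_num)))
      hTs
    have h6 : (T - s) * (84 * L ^ 2 * mass nbr ω γ A u s) ≤
        R * (84 * L ^ 2 * mass nbr ω γ A u s) :=
      mul_le_mul_of_nonneg_right hTR (by positivity)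
    have h7 : K * mass nbr ω γ A u s = 8 * mass nbr ω γ A u s +
      R * (84 * L ^ 2 * mass nbr ω γ A u s) := by ring
    rw [mul_sub] at h5
    change (T - s) * cutEnergy nbr ω γ A η u s - (T - s) * (84 * L ^ 2 * mass nbr ω γ A u s) ≤ _
      at h5
    linarith
  have hint := intervalIntegral.integral_le_sub_of_hasDeriv_right_of_le htT
    (fun s hs => (hderiv s hs).continuousAt.continuousWithinAt)
    (fun s hs => (hderiv s (Set.Ioo_subset_Icc_self hs)).hasDerivWithinAt)
    ((hcTE.fun_sub hcKM).integrableOn_Icc) (fun s hs => hlow s (Set.Ioo_subset_Icc_self hs))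
  rw [intervalIntegral.integral_sub (hcTE.intervalIntegrable_of_Icc htT)
    (hcKM.intervalIntegrable_of_Icc htT), intervalIntegral.integral_const_mul] at hint
  linarith

theorem sum_rpow_mul_le_interpolation {ι : Type*} (A : Finset ι) {w m : ι → ℝ} {p l ρ : ℝ}
    (hp : 1 < p) (hl : 0 < l) (hl1 : l < 1) (hρ : 0 < ρ) (hρl : 1 / ρ = l * (1 - 1 / p))
    (hw : ∀ x ∈ A, 0 ≤ w x) (hm : ∀ x ∈ A, 0 < m x) :
    ∑ x ∈ A, w x ^ (2 - l) * m x ≤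
      (∑ x ∈ A, w x * m x) ^ (1 - l) *
        ((∑ x ∈ A, w x ^ ρ) ^ (1 / ρ) * (∑ x ∈ A, m x ^ p) ^ (l / p)) := by
  have hp0 : 0 < p := by linarith
  have h := sum_rpow_mul_rpow_mul_rpow_le A (f := fun x => w x * m x) (g := fun x => w x ^ ρ)
    (h := fun x => m x ^ p) (θ₁ := 1 - l) (θ₂ := 1 / ρ) (θ₃ := l / p) (by linarith)
    (by positivity) (by positivity) (by rw [hρl]; ring)
    (fun x hx => mul_nonneg (hw x hx) (hm x hx).le) (fun x hx => Real.rpow_nonneg (hw x hx) _)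
    (fun x hx => Real.rpow_nonneg (hm x hx).le _)
  refine le_trans (le_of_eq (Finset.sum_congr rfl fun x hx => ?_)) h
  have hm' := hm x hx
  have hw' := hw x hx
  rw [← Real.rpow_mul hw', mul_one_div_cancel hρ.ne', Real.rpow_one, ← Real.rpow_mul hm'.le,
    mul_div_cancel₀ _ hp0.ne', Real.mul_rpow hw' hm'.le]
  have e1 : w x ^ (2 - l) = w x ^ (1 - l) * w x := by
    rw [← Real.rpow_add_one' hw' (by linarith)]; congr 1; ring
  have e2 : m x ^ (1 - l) * m x ^ l = m x := by
    rw [← Real.rpow_add hm', sub_add_cancel, Real.rpow_one]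
  calc w x ^ (2 - l) * m x = w x ^ (1 - l) * w x * (m x ^ (1 - l) * m x ^ l) := by rw [e1, e2]
    _ = _ := by ring

open Classical in
/-- At a fixed time, a higher power of `u` is controlled by the product of a power of the mass and
the Dirichlet energy. -/
theorem mass_le_cutMass_mul_cutEnergy {G : SimpleGraph V} {nbr : V → Finset V}
    (hnbr : ∀ x y, y ∈ nbr x ↔ G.Adj x y) {ω : V → V → ℝ}
    (hpos : ∀ x y, G.Adj x y → 0 < ω x y) (hmu : ∀ x, 0 < mu nbr ω x)
    {C s p q l ρ : ℝ} (hs : 1 ≤ s) (hC : 0 ≤ C) (hp : 1 < p)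
    (hq : 1 < q) (hl : 0 < l) (hl1 : l < 1) (hρ : 0 < ρ) (hρl : 1 / ρ = l * (1 - 1 / p))
    (hρs : 1 / ρ = 2 / s - 1 + 1 / q)
    (hiso : ∀ A : Finset V, A.Nonempty →
      (A.card : ℝ) ^ (1 / s) ≤ C * ∑ x ∈ A, (((nbr x).filter (· ∉ A)).card : ℝ))
    (γ : ℝ) {η : V → ℝ} {A A' : Finset V} (hη : ∀ x, 0 ≤ η x) (hηA : ∀ x, x ∉ A → η x = 0)
    (hA' : A' ⊆ A) (hη1 : ∀ x ∈ A', η x = 1) {u : ℝ → V → ℝ} {t : ℝ} (hu : ∀ x, 0 < u t x) :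
    mass nbr ω ((2 - l) * γ) A' u t ≤
      cutMass nbr ω γ A η u t ^ (1 - l) *
        ((C * (2 * ρ / s)) ^ 2 * (∑ x ∈ A, nu nbr ω x ^ q) ^ (1 / q) *
          (∑ x ∈ A, mu nbr ω x ^ p) ^ (l / p)) * cutEnergy nbr ω γ A η u t := by
  set w : V → ℝ := fun x => η x ^ 2 * u t x ^ γ with hw
  set g : V → ℝ := fun x => η x * u t x ^ (γ / 2) with hg
  have hw0 : ∀ x, 0 ≤ w x := fun x =>
    mul_nonneg (sq_nonneg _) (Real.rpow_nonneg (hu x).le _)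
  have hg0 : ∀ x, 0 ≤ g x := fun x => mul_nonneg (hη x) (Real.rpow_nonneg (hu x).le _)
  have hgw : ∀ x, g x ^ (2 * ρ) = w x ^ ρ := fun x => by
    rw [Real.rpow_mul (hg0 x)]
    congr 1
    simp only [hg, hw]
    rw [Real.mul_rpow (hη x) (Real.rpow_nonneg (hu x).le _), ← Real.rpow_mul (hu x).le,
      div_mul_cancel₀ _ two_ne_zero]
    norm_cast
  have h1 : mass nbr ω ((2 - l) * γ) A' u t ≤ ∑ x ∈ A, w x ^ (2 - l) * mu nbr ω x := by
    refine le_trans (le_of_eq (Finset.sum_congr rfl fun x hx => ?_))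
      (Finset.sum_le_sum_of_subset_of_nonneg hA' fun x _ _ =>
        mul_nonneg (Real.rpow_nonneg (hw0 x) _) (hmu x).le)
    simp only [hw, hη1 x hx]
    rw [one_pow, one_mul, ← Real.rpow_mul (hu x).le, mul_comm γ]
  have h2 := sum_rpow_mul_le_interpolation A hp hl hl1 hρ hρl (fun x _ => hw0 x)
    (fun x _ => hmu x)
  have h3 := sobolev_weighted hnbr hpos hs hC hq hρ hρs hiso A g hg0
    (fun x hx => by simp [hg, hηA x hx])
  rw [Finset.sum_congr rfl fun x _ => hgw x] at h3
  have hF : 0 ≤ (∑ x ∈ A, w x * mu nbr ω x) ^ (1 - l) :=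
    Real.rpow_nonneg (Finset.sum_nonneg fun x _ => mul_nonneg (hw0 x) (hmu x).le) _
  have hM : 0 ≤ (∑ x ∈ A, mu nbr ω x ^ p) ^ (l / p) :=
    Real.rpow_nonneg (Finset.sum_nonneg fun x _ => Real.rpow_nonneg (hmu x).le _) _
  refine h1.trans (h2.trans ((mul_le_mul_of_nonneg_left
    (mul_le_mul_of_nonneg_right h3 hM) hF).trans (le_of_eq ?_)))
  simp only [cutMass, cutEnergy, hw, hg]
  ring

open Classical in
/-- One step of the iteration, in unnormalised form. -/
theorem SuperCaloric.integral_mass_le {G : SimpleGraph V} {nbr : V → Finset V}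
    (hnbr : ∀ x y, y ∈ nbr x ↔ G.Adj x y) {ω : V → V → ℝ} (hsymm : ∀ x y, ω x y = ω y x)
    (hpos : ∀ x y, G.Adj x y → 0 < ω x y) (hnull : ∀ x y, ¬ G.Adj x y → ω x y = 0)
    (hmu : ∀ x, 0 < mu nbr ω x)
    {C s p q l ρ : ℝ} (hs : 1 ≤ s) (hC : 0 ≤ C) (hp : 1 < p)
    (hq : 1 < q) (hl : 0 < l) (hl1 : l < 1) (hρ : 0 < ρ) (hρl : 1 / ρ = l * (1 - 1 / p))
    (hρs : 1 / ρ = 2 / s - 1 + 1 / q)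
    (hiso : ∀ A : Finset V, A.Nonempty →
      (A.card : ℝ) ^ (1 / s) ≤ C * ∑ x ∈ A, (((nbr x).filter (· ∉ A)).card : ℝ))
    {γ L R : ℝ} (hγ : 0 < γ) (hγ' : γ ≤ 1 / 2) {u : ℝ → V → ℝ} {η : V → ℝ}
    (hη : ∀ x, 0 ≤ η x) (hη1 : ∀ x, η x ≤ 1) {A A' : Finset V} (hηA : ∀ x, x ∉ A → η x = 0)
    (hA' : A' ⊆ A) (hηA' : ∀ x ∈ A', η x = 1)
    (hηL : ∀ x y, G.Adj x y → |η x - η y| ≤ L)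
    {a a' b' T D : ℝ} (haa' : a ≤ a') (hab' : a' ≤ b') (hD : 0 < D) (hDT : D ≤ T - b')
    (hR : T - a ≤ R) (hu : ∀ s ∈ Set.Icc a T, ∀ x, 0 < u s x)
    (hsuper : SuperCaloric nbr ω (Set.Icc a T) (A : Set V) u) :
    ∫ t in a'..b', mass nbr ω ((2 - l) * γ) A' u t ≤
      ((8 + 84 * L ^ 2 * R) / D * ∫ t in a..T, mass nbr ω γ A u t) ^ (2 - l) *
        ((C * (2 * ρ / s)) ^ 2 * (∑ x ∈ A, nu nbr ω x ^ q) ^ (1 / q) *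
          (∑ x ∈ A, mu nbr ω x ^ p) ^ (l / p)) := by
  set H := (C * (2 * ρ / s)) ^ 2 * (∑ x ∈ A, nu nbr ω x ^ q) ^ (1 / q) *
          (∑ x ∈ A, mu nbr ω x ^ p) ^ (l / p) with hH
  set J := ∫ t in a..T, mass nbr ω γ A u t with hJ
  set K := 8 + 84 * L ^ 2 * R with hK
  have hK0 : 0 ≤ K := by
    have : 0 ≤ R := by linarith
    positivity
  have hω : ∀ x, ∀ y ∈ nbr x, 0 < ω x y := fun x y hy => hpos x y ((hnbr x y).1 hy)
  have hH0 : 0 ≤ H := mul_nonneg (mul_nonneg (sq_nonneg _) (Real.rpow_nonneg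
    (Finset.sum_nonneg fun x _ => Real.rpow_nonneg (Finset.sum_nonneg fun y hy =>
      (inv_pos.2 (hω x y hy)).le) _) _))
    (Real.rpow_nonneg (Finset.sum_nonneg fun x _ => Real.rpow_nonneg (hmu x).le _) _)
  have hE0 : ∀ t, 0 ≤ cutEnergy nbr ω γ A η u t := fun t =>
    Finset.sum_nonneg fun x _ => Finset.sum_nonneg fun y hy =>
      mul_nonneg (hω x y hy).le (sq_nonneg _)
  have hM0 : ∀ t ∈ Set.Icc a T, 0 ≤ mass nbr ω γ A u t := fun t ht =>
    Finset.sum_nonneg fun x _ => mul_nonneg (Real.rpow_nonneg (hu t ht x).le _) (hmu x).le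
  have hF0 : ∀ t ∈ Set.Icc a T, 0 ≤ cutMass nbr ω γ A η u t := fun t ht =>
    Finset.sum_nonneg fun x _ => mul_nonneg (mul_nonneg (sq_nonneg _)
      (Real.rpow_nonneg (hu t ht x).le _)) (hmu x).le
  have hcM := hsuper.continuousOn_mass hu γ
  have hcE := hsuper.continuousOn_cutEnergy hu γ hηA
  have hest : ∀ t ∈ Set.Icc a' b', (T - t) * (8 * cutMass nbr ω γ A η u t) +
      ∫ s in t..T, (T - s) * cutEnergy nbr ω γ A η u s ≤ K * J := by
    intro t ht
    have htT : t ≤ T := by linarith [ht.2]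
    have hat : a ≤ t := haa'.trans ht.1
    have hsub : Set.Icc t T ⊆ Set.Icc a T := Set.Icc_subset_Icc_left hat
    refine (SuperCaloric.energy_estimate hnbr hsymm hpos hnull hmu hγ hγ' hη hη1 hηA hηL htT
      (R := R) (by linarith) (fun s hs => hu s (hsub hs)) (hsuper.mono hsub subset_rfl)).trans ?_
    refine mul_le_mul_of_nonneg_left ?_ hK0
    refine intervalIntegral.integral_mono_interval hat htT le_rfl ?_
      (hcM.intervalIntegrable_of_Icc (hat.trans htT))
    exact (ae_restrict_mem measurableSet_Ioc).mono fun s hs =>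
      hM0 s (Set.Ioc_subset_Icc_self hs)
  have hI0 : ∀ t ∈ Set.Icc a' b', 0 ≤ ∫ s in t..T, (T - s) * cutEnergy nbr ω γ A η u s :=
    fun t ht => intervalIntegral.integral_nonneg (by linarith [ht.2]) fun s hs =>
      mul_nonneg (by linarith [hs.2]) (hE0 s)
  have hmem : ∀ t ∈ Set.Icc a' b', t ∈ Set.Icc a T := fun t ht =>
    ⟨haa'.trans ht.1, by linarith [ht.2]⟩
  have hFle : ∀ t ∈ Set.Icc a' b', cutMass nbr ω γ A η u t ≤ K / D * J := by
    intro t ht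
    have h1 := hest t ht
    have h2 := hI0 t ht
    have h3 := hF0 t (hmem t ht)
    have h4 : D ≤ T - t := by linarith [ht.2]
    rw [div_mul_eq_mul_div, le_div_iff₀ hD]
    nlinarith
  have hEint : ∫ t in a'..b', cutEnergy nbr ω γ A η u t ≤ K / D * J := by
    have h1 := hest a' ⟨le_rfl, hab'⟩
    have h3 := mul_nonneg (by linarith : 0 ≤ T - a')
      (mul_nonneg (by norm_num : (0 : ℝ) ≤ 8) (hF0 a' (hmem a' ⟨le_rfl, hab'⟩)))
    have hcTE : ContinuousOn (fun s => (T - s) * cutEnergy nbr ω γ A η u s) (Set.Icc a T) :=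
      (continuousOn_const.sub continuousOn_id).mul hcE
    have hsub : Set.Icc a' b' ⊆ Set.Icc a T := hmem
    have h4 : ∫ t in a'..b', D * cutEnergy nbr ω γ A η u t ≤
        ∫ t in a'..b', (T - t) * cutEnergy nbr ω γ A η u t := by
      refine intervalIntegral.integral_mono_on hab'
        ((continuousOn_const.mul (hcE.mono hsub)).intervalIntegrable_of_Icc hab')
        ((hcTE.mono hsub).intervalIntegrable_of_Icc hab') fun t ht => ?_
      exact mul_le_mul_of_nonneg_right (by linarith [ht.2]) (hE0 t)
    have h5 : ∫ t in a'..b', (T - t) * cutEnergy nbr ω γ A η u t ≤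
        ∫ t in a'..T, (T - t) * cutEnergy nbr ω γ A η u t := by
      refine intervalIntegral.integral_mono_interval le_rfl hab' (by linarith) ?_
        ((hcTE.mono (Set.Icc_subset_Icc_left haa')).intervalIntegrable_of_Icc (by linarith))
      exact (ae_restrict_mem measurableSet_Ioc).mono fun s hs =>
        mul_nonneg (by linarith [hs.2]) (hE0 s)
    rw [intervalIntegral.integral_const_mul] at h4
    rw [div_mul_eq_mul_div, le_div_iff₀ hD]
    linarith
  have hX0 : 0 ≤ K / D * J :=
    (hF0 a' (hmem a' ⟨le_rfl, hab'⟩)).trans (hFle a' ⟨le_rfl, hab'⟩)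
  have hsub : Set.Icc a' b' ⊆ Set.Icc a T := hmem
  have hstep : ∫ t in a'..b', mass nbr ω ((2 - l) * γ) A' u t ≤
      ∫ t in a'..b', (K / D * J) ^ (1 - l) * H * cutEnergy nbr ω γ A η u t := by
    refine intervalIntegral.integral_mono_on hab'
      (((hsuper.mono hsub (Finset.coe_subset.2 hA')).continuousOn_mass
        (fun t ht => hu t (hsub ht)) _).intervalIntegrable_of_Icc hab')
      ((continuousOn_const.mul (hcE.mono hsub)).intervalIntegrable_of_Icc hab') fun t ht => ?_
    refine (mass_le_cutMass_mul_cutEnergy hnbr hpos hmu hs hC hp hq hl hl1 hρ hρl hρs hiso γ hη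
      hηA hA' hηA' (hu t (hmem t ht))).trans ?_
    refine mul_le_mul_of_nonneg_right (mul_le_mul_of_nonneg_right ?_ hH0) (hE0 t)
    exact Real.rpow_le_rpow (hF0 t (hmem t ht)) (hFle t ht) (by linarith)
  rw [intervalIntegral.integral_const_mul] at hstep
  refine hstep.trans ((mul_le_mul_of_nonneg_left hEint
    (mul_nonneg (Real.rpow_nonneg hX0 _) hH0)).trans (le_of_eq ?_))
  have e : (K / D * J) ^ (2 - l) = (K / D * J) ^ (1 - l) * (K / D * J) := by
    rw [← Real.rpow_add_one' hX0 (by linarith)]; congr 1; ring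
  rw [e]; ring

/-- Abstract iteration: a self-improving estimate with gain `a > 1`, losing a power of the gap
`σ - σ'`, can be iterated with total loss independent of the number of iterations. -/
theorem exists_iteration_exponent {a : ℝ} (ha : 1 < a) :
    ∃ c : ℝ, 0 < c ∧ ∀ (Φ : ℝ → ℝ → ℝ) (Q : ℝ), 1 ≤ Q →
      (∀ γ σ, 0 < γ → 1 / 2 ≤ σ → σ ≤ 1 → 0 ≤ Φ γ σ) →
      (∀ γ σ' σ, 0 < γ → 1 / 2 ≤ σ' → σ' < σ → σ ≤ 1 → Φ γ σ' ≤ Φ γ σ) →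
      (∀ γ σ' σ, 0 < γ → γ ≤ 1 / 2 → 1 / 2 ≤ σ' → σ' < σ → σ ≤ 1 →
        Φ (a * γ) σ' ≤ ((Q / (σ - σ') ^ 2) ^ 2 * Φ γ σ) ^ a) →
      ∀ (k : ℕ) (γ σ' σ : ℝ), 0 < γ → a ^ k * γ ≤ 1 / 2 → 1 / 2 ≤ σ' → σ' < σ → σ ≤ 1 →
        Φ (a ^ k * γ) σ' ≤ ((Q / (σ - σ') ^ 2) ^ c * Φ γ σ) ^ (a ^ k) := by
  set τ := (a - 1) / 2 with hτ
  have hτ0 : 0 < τ := by rw [hτ]; linarith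
  set θ : ℝ := (2 : ℝ) ^ (-τ) with hθ
  have hθ0 : 0 < θ := Real.rpow_pos_of_pos two_pos _
  have hθ1 : θ < 1 := Real.rpow_lt_one_of_one_lt_of_neg one_lt_two (by linarith)
  obtain ⟨m, hm⟩ := pow_unbounded_of_one_lt (((1 - θ) ^ 2)⁻¹) (by norm_num : (1 : ℝ) < 4)
  set c : ℝ := 2 * (1 + m) * (2 * a / (a - 1)) with hc
  have hc0 : 0 < c := by
    have : 0 < a - 1 := by linarith
    positivity
  have hθ2 : (θ ^ 2)⁻¹ = (4 : ℝ) ^ τ := by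
    rw [hθ, ← Real.rpow_natCast, ← Real.rpow_mul two_pos.le, ← Real.rpow_neg two_pos.le,
      show (4 : ℝ) = 2 ^ (2 : ℝ) by norm_num, ← Real.rpow_mul two_pos.le]
    congr 1; push_cast; ring
  refine ⟨c, hc0, ?_⟩
  intro Φ Q hQ hΦ hmono hstep k
  have hZ4 : ∀ σ' σ : ℝ, 1 / 2 ≤ σ' → σ' < σ → σ ≤ 1 → 4 ≤ Q / (σ - σ') ^ 2 := by
    intro σ' σ h1 h2 h3
    have h0 : 0 < σ - σ' := by linarith
    rw [le_div_iff₀ (by positivity)]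
    nlinarith
  induction k with
  | zero =>
    intro γ σ' σ hγ _ h1 h2 h3
    have hZ := hZ4 σ' σ h1 h2 h3
    have h4 : 1 ≤ (Q / (σ - σ') ^ 2) ^ c := Real.one_le_rpow (by linarith) hc0.le
    have h5 := hΦ γ σ hγ (by linarith) h3
    simp only [pow_zero, one_mul, Real.rpow_one]
    nlinarith [hmono γ σ' σ hγ h1 h2 h3]
  | succ k ih =>
    intro γ σ' σ hγ hγk h1 h2 h3
    have hδ : 0 < σ - σ' := by linarith
    obtain ⟨Z, hZdef⟩ : ∃ Z, Z = Q / (σ - σ') ^ 2 := ⟨_, rfl⟩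
    have hZ : 4 ≤ Z := hZdef ▸ hZ4 σ' σ h1 h2 h3
    have hZ0 : 0 < Z := by linarith
    set σ₁ := σ' + θ * (σ - σ') with hσ₁
    have hσ₁1 : σ' < σ₁ := by rw [hσ₁]; nlinarith
    have hσ₁2 : σ₁ < σ := by rw [hσ₁]; nlinarith
    have hak : 1 ≤ a ^ k := one_le_pow₀ ha.le
    have hak1 : 1 ≤ a ^ (k + 1) := one_le_pow₀ ha.le
    have hI := ih (a * γ) σ' σ₁ (by positivity) (by rw [← mul_assoc, ← pow_succ]; exact hγk) h1
      hσ₁1 (by linarith)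
    have hS := hstep γ σ₁ σ hγ (by nlinarith) (by linarith) hσ₁2 h3
    have e1 : Q / (σ₁ - σ') ^ 2 = Z * (θ ^ 2)⁻¹ := by
      rw [hσ₁, hZdef, add_sub_cancel_left, mul_pow]; field_simp
    have e2 : Q / (σ - σ₁) ^ 2 = Z * ((1 - θ) ^ 2)⁻¹ := by
      have h1θ : (1 - θ) ≠ 0 := by linarith
      rw [show σ - σ₁ = (1 - θ) * (σ - σ') by rw [hσ₁]; ring, hZdef, mul_pow]; field_simp
    rw [e1] at hI
    rw [e2] at hS
    have hX : Z * (θ ^ 2)⁻¹ ≤ Z ^ (1 + τ) := by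
      rw [hθ2, Real.rpow_add hZ0, Real.rpow_one]
      exact mul_le_mul_of_nonneg_left (Real.rpow_le_rpow (by norm_num) hZ hτ0.le) hZ0.le
    have hY : Z * ((1 - θ) ^ 2)⁻¹ ≤ Z ^ (1 + m : ℝ) := by
      rw [Real.rpow_add hZ0, Real.rpow_one, Real.rpow_natCast]
      exact mul_le_mul_of_nonneg_left (hm.le.trans (pow_le_pow_left₀ (by norm_num) hZ m)) hZ0.le
    have hX0 : 0 ≤ Z * (θ ^ 2)⁻¹ := by positivity
    have hY0 : 0 ≤ Z * ((1 - θ) ^ 2)⁻¹ := by positivity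
    have hΦ0 := hΦ γ σ hγ (by linarith) h3
    have hX' : (Z * (θ ^ 2)⁻¹) ^ c ≤ (Z ^ ((1 + τ) * (c / a))) ^ a := by
      rw [← Real.rpow_mul hZ0.le]
      calc (Z * (θ ^ 2)⁻¹) ^ c ≤ (Z ^ (1 + τ)) ^ c := Real.rpow_le_rpow hX0 hX hc0.le
        _ = _ := by rw [← Real.rpow_mul hZ0.le]; congr 1; field_simp
    have hY' : (Z * ((1 - θ) ^ 2)⁻¹) ^ 2 ≤ Z ^ ((1 + m : ℝ) * 2) := by
      rw [Real.rpow_mul hZ0.le]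
      calc (Z * ((1 - θ) ^ 2)⁻¹) ^ 2 ≤ (Z ^ (1 + m : ℝ)) ^ 2 := pow_le_pow_left₀ hY0 hY 2
        _ = _ := by norm_cast
    have hexp : (1 + τ) * (c / a) + (1 + m : ℝ) * 2 = c := by
      have : a - 1 ≠ 0 := by linarith
      rw [hc, hτ]; field_simp; ring
    have hcomb : (Z * (θ ^ 2)⁻¹) ^ c * Φ (a * γ) σ₁ ≤ (Z ^ c * Φ γ σ) ^ a := by
      calc (Z * (θ ^ 2)⁻¹) ^ c * Φ (a * γ) σ₁
          ≤ (Z ^ ((1 + τ) * (c / a))) ^ a * (Z ^ ((1 + m : ℝ) * 2) * Φ γ σ) ^ a := by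
            refine mul_le_mul hX' (hS.trans ?_) (hΦ _ _ (by positivity) (by linarith)
              (by linarith)) (by positivity)
            exact Real.rpow_le_rpow (mul_nonneg (sq_nonneg _) hΦ0)
              (mul_le_mul_of_nonneg_right hY' hΦ0) (by linarith)
        _ = (Z ^ c * Φ γ σ) ^ a := by
            rw [← Real.mul_rpow (by positivity) (by positivity), ← mul_assoc,
              ← Real.rpow_add hZ0, hexp]
    rw [show a ^ (k + 1) * γ = a ^ k * (a * γ) by ring, ← hZdef, pow_succ', Real.rpow_mul
      (by positivity)]
    refine hI.trans (Real.rpow_le_rpow ?_ hcomb (by linarith))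
    exact mul_nonneg (Real.rpow_nonneg hX0 _)
      (hΦ _ _ (by positivity) (by linarith) (by linarith))

theorem exists_cutoff {G : SimpleGraph V} (hG : G.Connected) (x₀ : V) {r' r : ℝ} (hr : r' < r) :
    ∃ η : V → ℝ, (∀ x, 0 ≤ η x) ∧ (∀ x, η x ≤ 1) ∧ (∀ x, (G.dist x₀ x : ℝ) ≤ r' → η x = 1) ∧
      (∀ x, ¬ (G.dist x₀ x : ℝ) ≤ r → η x = 0) ∧
      ∀ x y, G.Adj x y → |η x - η y| ≤ 1 / (r - r') := by
  have hr0 : 0 < r - r' := by linarith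
  refine ⟨fun x => max 0 (min 1 ((r - G.dist x₀ x) / (r - r'))), fun x => le_max_left _ _,
    fun x => max_le zero_le_one (min_le_left _ _), fun x hx => ?_, fun x hx => ?_,
    fun x y hxy => ?_⟩
  · have : 1 ≤ (r - G.dist x₀ x) / (r - r') := by rw [le_div_iff₀ hr0]; linarith
    beta_reduce
    rw [min_eq_left this, max_eq_right zero_le_one]
  · have : (r - G.dist x₀ x) / (r - r') ≤ 0 :=
      div_nonpos_of_nonpos_of_nonneg (by linarith [not_le.1 hx]) hr0.le
    exact max_eq_left ((min_le_right _ _).trans this)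
  · have h1 : (G.dist x₀ y : ℝ) ≤ G.dist x₀ x + 1 := by
      have := hG.dist_triangle (u := x₀) (v := x) (w := y)
      rw [SimpleGraph.dist_eq_one_iff_adj.2 hxy] at this
      exact_mod_cast this
    have h2 : (G.dist x₀ x : ℝ) ≤ G.dist x₀ y + 1 := by
      have := hG.dist_triangle (u := x₀) (v := y) (w := x)
      rw [SimpleGraph.dist_eq_one_iff_adj.2 hxy.symm] at this
      exact_mod_cast this
    refine (abs_max_sub_max_le_max _ _ _ _).trans ?_
    rw [sub_self, abs_zero]
    refine max_le (by positivity) ((abs_min_sub_min_le_max _ _ _ _).trans ?_)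
    rw [sub_self, abs_zero]
    refine max_le (by positivity) ?_
    rw [← sub_div, abs_div, abs_of_pos hr0]
    refine div_le_div_of_nonneg_right ?_ hr0.le
    rw [abs_le]; constructor <;> linarith

theorem mu_pos {G : SimpleGraph V} {nbr : V → Finset V} (hnbr : ∀ x y, y ∈ nbr x ↔ G.Adj x y)
    [Nontrivial V] (hG : G.Connected) {ω : V → V → ℝ} (hpos : ∀ x y, G.Adj x y → 0 < ω x y)
    (x : V) : 0 < mu nbr ω x := by
  obtain ⟨y, hy⟩ := hG.preconnected.exists_adj_of_nontrivial x
  exact Finset.sum_pos (fun z hz => hpos x z ((hnbr x z).1 hz)) ⟨y, (hnbr x y).2 hy⟩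

theorem sum_rpow_rpow_eq_card_mul_nrm {A : Finset V} (hA : A.Nonempty) {f : V → ℝ} {q : ℝ}
    (hf : ∀ x, 0 ≤ f x) :
    (∑ x ∈ A, f x ^ q) ^ (1 / q) = (A.card : ℝ) ^ (1 / q) * nrm A q f := by
  have hN : (0 : ℝ) < A.card := by exact_mod_cast hA.card_pos
  have hS : 0 ≤ ∑ x ∈ A, f x ^ q := Finset.sum_nonneg fun x _ => Real.rpow_nonneg (hf x) _
  rw [nrm, ← Real.mul_rpow hN.le (by
    simp only [abs_of_nonneg (hf _)]; positivity), mul_inv_cancel_left₀ hN.ne']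
  simp only [abs_of_nonneg (hf _)]

theorem nrm_le_nrmE {A : Finset V} (hA : A.Nonempty) (f : V → ℝ) {p : ℝ≥0∞} {p' : ℝ}
    (hp' : 0 < p') (h : p = ⊤ ∨ p.toReal = p' ∧ p ≠ ⊤) : nrm A p' f ≤ nrmE A p f := by
  rcases h with rfl | ⟨rfl, hp⟩
  · rw [nrmE, if_pos rfl, nrm]
    have hN : (0 : ℝ) < A.card := by exact_mod_cast hA.card_pos
    set S := sSup ((fun x => |f x|) '' (A : Set V))
    have hS : ∀ x ∈ A, |f x| ≤ S := fun x hx =>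
      le_csSup (A.finite_toSet.image _).bddAbove ⟨x, hx, rfl⟩
    have hS0 : 0 ≤ S := by
      obtain ⟨x, hx⟩ := hA
      exact (abs_nonneg _).trans (hS x hx)
    calc ((A.card : ℝ)⁻¹ * ∑ x ∈ A, |f x| ^ p') ^ (1 / p')
        ≤ ((A.card : ℝ)⁻¹ * ∑ _x ∈ A, S ^ p') ^ (1 / p') := by
          gcongr with x hx
          exact hS x hx
      _ = S := by
          rw [Finset.sum_const, nsmul_eq_mul, inv_mul_cancel_left₀ hN.ne', ← Real.rpow_mul hS0,
            mul_one_div_cancel hp'.ne', Real.rpow_one]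
  · rw [nrmE, if_neg hp]

theorem card_inv_mul_sum_le_nrm {A : Finset V} (hA : A.Nonempty) {f : V → ℝ} {p : ℝ}
    (hp : 1 < p) (hf : ∀ x, 0 ≤ f x) : (A.card : ℝ)⁻¹ * ∑ x ∈ A, f x ≤ nrm A p f := by
  have hp0 : 0 < p := by linarith
  have hN : (0 : ℝ) < A.card := by exact_mod_cast hA.card_pos
  have h1p : 1 / p < 1 := (div_lt_one hp0).2 hp
  have h := sum_rpow_mul_rpow_le A (f := fun x => f x ^ p) (g := fun _ => (1 : ℝ))
    (θ := 1 / p) (θ' := 1 - 1 / p) (by positivity) (by linarith) (by ring)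
    (fun x _ => Real.rpow_nonneg (hf x) _) (fun _ _ => zero_le_one)
  have e : ∑ x ∈ A, (f x ^ p) ^ (1 / p) * (1 : ℝ) ^ (1 - 1 / p) = ∑ x ∈ A, f x :=
    Finset.sum_congr rfl fun x _ => by
      rw [← Real.rpow_mul (hf x), mul_one_div_cancel hp0.ne', Real.rpow_one, Real.one_rpow,
        mul_one]
  rw [e, sum_rpow_rpow_eq_card_mul_nrm hA hf, Finset.sum_const, nsmul_eq_mul, mul_one,
    mul_right_comm, ← Real.rpow_add hN, add_sub_cancel, Real.rpow_one] at h
  rwa [inv_mul_le_iff₀ hN]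

/-- Finite exponents can replace infinite ones in `p⁻¹ + q⁻¹ < 2 / d`. -/
theorem exists_real_exponents {d : ℕ} (hd : 2 ≤ d) {p q : ℝ≥0∞} (hp : 1 < p) (hq : 1 < q)
    (hpq : p⁻¹ + q⁻¹ < 2 / (d : ℝ≥0∞)) :
    ∃ p' q' : ℝ, 1 < p' ∧ 1 < q' ∧ 1 / p' + 1 / q' < 2 / d ∧
      (p = ⊤ ∨ p.toReal = p' ∧ p ≠ ⊤) ∧ (q = ⊤ ∨ q.toReal = q' ∧ q ≠ ⊤) := by
  have hd0 : (0 : ℝ) < d := by exact_mod_cast (by omega : 0 < d)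
  have hlt : p⁻¹.toReal + q⁻¹.toReal < 2 / d := by
    have hp' : p⁻¹ ≠ ⊤ := ENNReal.inv_ne_top.2 (zero_lt_one.trans hp).ne'
    have hq' : q⁻¹ ≠ ⊤ := ENNReal.inv_ne_top.2 (zero_lt_one.trans hq).ne'
    rw [← ENNReal.toReal_add hp' hq']
    have h := (ENNReal.toReal_lt_toReal (ENNReal.add_ne_top.2 ⟨hp', hq'⟩) (ENNReal.div_ne_top
      ENNReal.ofNat_ne_top (by exact_mod_cast (by omega : d ≠ 0)))).2 hpq
    simpa [ENNReal.toReal_div] using h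
  set κ := 2 / (d : ℝ) - (p⁻¹.toReal + q⁻¹.toReal) with hκ
  have hκ0 : 0 < κ := by rw [hκ]; linarith
  have key : ∀ r : ℝ≥0∞, 1 < r → ∃ r' : ℝ, 1 < r' ∧ 1 / r' < r⁻¹.toReal + κ / 2 ∧
      (r = ⊤ ∨ r.toReal = r' ∧ r ≠ ⊤) := by
    intro r hr
    by_cases h : r = ⊤
    · refine ⟨2 + 2 / κ, by have : 0 < 2 / κ := by positivity
                            linarith, ?_, Or.inl h⟩
      have : 0 ≤ r⁻¹.toReal := ENNReal.toReal_nonneg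
      have h2 : 1 / (2 + 2 / κ) < κ / 2 := by
        rw [div_lt_iff₀ (by positivity)]
        have : κ / 2 * (2 + 2 / κ) = κ + 1 := by field_simp
        linarith
      linarith
    · refine ⟨r.toReal, ?_, ?_, Or.inr ⟨rfl, h⟩⟩
      · have := (ENNReal.toReal_lt_toReal ENNReal.one_ne_top h).2 hr
        simpa using this
      · rw [ENNReal.toReal_inv, one_div]; linarith
  obtain ⟨p', hp1, hp2, hp3⟩ := key p hp
  obtain ⟨q', hq1, hq2, hq3⟩ := key q hq
  exact ⟨p', q', hp1, hq1, by linarith, hp3, hq3⟩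

theorem sum_rpow_rpow_le_card_mul {A B : Finset V} (hAB : A ⊆ B) (hB : B.Nonempty) {f : V → ℝ}
    (hf : ∀ x, 0 ≤ f x) {p l M : ℝ} (hp : 0 < p) (hl : 0 ≤ l) (hl1 : l ≤ 1) (hM : 1 ≤ M)
    (hfM : nrm B p f ≤ M) :
    (∑ x ∈ A, f x ^ p) ^ (l / p) ≤ (B.card : ℝ) ^ (l / p) * M := by
  have hA0 : 0 ≤ ∑ x ∈ A, f x ^ p := Finset.sum_nonneg fun x _ => Real.rpow_nonneg (hf x) _
  have hsum : ∑ x ∈ A, f x ^ p ≤ ∑ x ∈ B, f x ^ p :=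
    Finset.sum_le_sum_of_subset_of_nonneg hAB fun x _ _ => Real.rpow_nonneg (hf x) _
  have hB0 := hA0.trans hsum
  have hN : (0 : ℝ) ≤ B.card := Nat.cast_nonneg _
  have hn0 : 0 ≤ nrm B p f := Real.rpow_nonneg (mul_nonneg (inv_nonneg.2 hN)
    (Finset.sum_nonneg fun x _ => Real.rpow_nonneg (abs_nonneg _) _)) _
  calc (∑ x ∈ A, f x ^ p) ^ (l / p)
      ≤ (∑ x ∈ B, f x ^ p) ^ (l / p) := Real.rpow_le_rpow hA0 hsum (by positivity)
    _ = ((∑ x ∈ B, f x ^ p) ^ (1 / p)) ^ l := by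
        rw [← Real.rpow_mul hB0]; congr 1; ring
    _ = (B.card : ℝ) ^ (l / p) * nrm B p f ^ l := by
        rw [sum_rpow_rpow_eq_card_mul_nrm hB hf, Real.mul_rpow (Real.rpow_nonneg hN _) hn0,
          ← Real.rpow_mul hN]
        congr 2; ring
    _ ≤ (B.card : ℝ) ^ (l / p) * M := by
        refine mul_le_mul_of_nonneg_left ?_ (Real.rpow_nonneg hN _)
        calc nrm B p f ^ l ≤ M ^ l := Real.rpow_le_rpow hn0 hfM hl
          _ ≤ M ^ (1 : ℝ) := Real.rpow_le_rpow_of_exponent_le hM hl1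
          _ = M := Real.rpow_one M

/-- The mass of `u ^ γ` on the cylinder `Q(σn)`, normalised by the size of `Q(n)`. -/
def cylinderMass (nbr : V → Finset V) (ω : V → V → ℝ) (B : ℝ → Finset V) (t₀ n s' s'' : ℝ)
    (u : ℝ → V → ℝ) (γ σ : ℝ) : ℝ :=
  (n ^ 2 * ((B n).card : ℝ))⁻¹ *
    ∫ t in (σ * t₀ + (1 - σ) * s')..((1 - σ) * s'' + σ * (t₀ + n ^ 2)),
      mass nbr ω γ (B (σ * n)) u t

theorem normalised_step_le {N n δ ε J X S Sν Sμ Mμ Mν Creg K a b c d' : ℝ} (hN : 0 < N)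
    (hn : 1 ≤ n) (hδ : 0 < δ) (hδ1 : δ ≤ 1) (hε : 0 < ε) (hε1 : ε ≤ 1) (hJ : 0 ≤ J) (hS : 0 ≤ S)
    (ha : 1 ≤ a) (hSν0 : 0 ≤ Sν) (hSμ0 : 0 ≤ Sμ)
    (hMμ : 1 ≤ Mμ) (hMν : 1 ≤ Mν) (hCreg : 0 < Creg)
    (hX : X ≤ ((8 + 84 * (1 / (δ * n)) ^ 2 * n ^ 2) / (δ * (ε * n ^ 2)) * J) ^ a *
      (S * Sν * Sμ))
    (hSν : Sν ≤ N ^ b * Mν) (hSμ : Sμ ≤ N ^ c * Mμ) (habc : a - 1 + b + c = d')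
    (hNn : N ^ d' ≤ Creg ^ d' * n ^ 2) (hK : 92 / ε * (1 + S * Creg ^ d') ≤ K) :
    (n ^ 2 * N)⁻¹ * X ≤ ((K * (Mμ * Mν) / δ ^ 2) ^ 2 * ((n ^ 2 * N)⁻¹ * J)) ^ a := by
  have hn0 : 0 < n := by linarith
  have hC0 : 0 < Creg ^ d' := Real.rpow_pos_of_pos hCreg _
  set Φ := (n ^ 2 * N)⁻¹ * J with hΦ
  have hΦ0 : 0 ≤ Φ := by positivity
  have hJΦ : J = n ^ 2 * N * Φ := by rw [hΦ]; field_simp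
  set Y := 92 / (ε * δ ^ 3) with hY
  have hY0 : 0 < Y := by positivity
  have hbase : (8 + 84 * (1 / (δ * n)) ^ 2 * n ^ 2) / (δ * (ε * n ^ 2)) * J ≤ N * (Y * Φ) := by
    have h1 : (8 + 84 * (1 / (δ * n)) ^ 2 * n ^ 2) / (δ * (ε * n ^ 2)) * J =
        (8 * δ ^ 2 + 84) / (ε * δ ^ 3) * (N * Φ) := by
      rw [hJΦ]; field_simp
    have h2 : (8 * δ ^ 2 + 84) / (ε * δ ^ 3) ≤ Y := by
      rw [hY]; gcongr; nlinarith
    rw [h1]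
    calc _ ≤ Y * (N * Φ) := mul_le_mul_of_nonneg_right h2 (by positivity)
      _ = _ := by ring
  have hX2 : X ≤ (N * (Y * Φ)) ^ a * (S * (N ^ b * Mν) * (N ^ c * Mμ)) := by
    refine hX.trans ?_
    gcongr
  have hpow : (N * (Y * Φ)) ^ a * (S * (N ^ b * Mν) * (N ^ c * Mμ)) =
      N * N ^ d' * (S * (Mμ * Mν) * (Y * Φ) ^ a) := by
    rw [Real.mul_rpow hN.le (by positivity), ← habc, Real.rpow_add hN,
      Real.rpow_add hN, Real.rpow_sub_one hN.ne']
    field_simp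
  have hM1 : 1 ≤ Mμ * Mν := one_le_mul_of_one_le_of_one_le hMμ hMν
  set W := (1 + S * Creg ^ d') * (Mμ * Mν) with hW
  have hSC : 0 ≤ S * Creg ^ d' := by positivity
  have hW1 : 1 ≤ W := one_le_mul_of_one_le_of_one_le (by linarith) hM1
  have hlin : (n ^ 2 * N)⁻¹ * X ≤ W * (Y * Φ) ^ a := by
    calc (n ^ 2 * N)⁻¹ * X ≤ (n ^ 2 * N)⁻¹ * (N * N ^ d' * (S * (Mμ * Mν) * (Y * Φ) ^ a)) := by
          rw [← hpow]; gcongr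
      _ ≤ (n ^ 2 * N)⁻¹ * (N * (Creg ^ d' * n ^ 2) * (S * (Mμ * Mν) * (Y * Φ) ^ a)) := by
          gcongr
      _ = (S * Creg ^ d') * (Mμ * Mν) * (Y * Φ) ^ a := by field_simp
      _ ≤ W * (Y * Φ) ^ a := by
          rw [hW]; gcongr; linarith
  have hWa : W ≤ W ^ a := by
    simpa using Real.rpow_le_rpow_of_exponent_le hW1 ha
  calc (n ^ 2 * N)⁻¹ * X ≤ W * (Y * Φ) ^ a := hlin
    _ ≤ W ^ a * (Y * Φ) ^ a := by gcongr
    _ = (W * (Y * Φ)) ^ a := (Real.mul_rpow (by positivity) (by positivity)).symm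
    _ ≤ _ := by
      refine Real.rpow_le_rpow (by positivity) ?_ (by linarith)
      rw [← mul_assoc]
      refine mul_le_mul_of_nonneg_right ?_ hΦ0
      have hKW : 92 / ε * W ≤ K * (Mμ * Mν) := by
        rw [hW, ← mul_assoc]; gcongr
      have h92 : 1 ≤ 92 / ε := by rw [le_div_iff₀ hε]; linarith
      have hZ : 1 ≤ 92 / ε * W := one_le_mul_of_one_le_of_one_le h92 hW1
      calc W * Y = 92 / ε * W / δ ^ 3 := by rw [hY]; field_simp
        _ ≤ (92 / ε * W) ^ 2 / δ ^ 4 := by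
          refine div_le_div₀ (by positivity) (by nlinarith) (by positivity) ?_
          exact pow_le_pow_of_le_one hδ.le hδ1 (by norm_num)
        _ ≤ (K * (Mμ * Mν)) ^ 2 / δ ^ 4 := by gcongr
        _ = _ := by rw [div_pow]; ring

open Classical in
/-- One step of the reverse iteration: passing from `γ` to `(2 - l) γ` on a smaller cylinder. -/
theorem SuperCaloric.cylinderMass_step {G : SimpleGraph V} {nbr : V → Finset V}
    (hnbr : ∀ x y, y ∈ nbr x ↔ G.Adj x y) (hG : G.Connected) {ball : V → ℝ → Finset V}
    (hball : ∀ (x : V) (r : ℝ) (y : V), y ∈ ball x r ↔ (G.dist x y : ℝ) ≤ r)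
    {ω : V → V → ℝ} (hsymm : ∀ x y, ω x y = ω y x)
    (hpos : ∀ x y, G.Adj x y → 0 < ω x y) (hnull : ∀ x y, ¬ G.Adj x y → ω x y = 0)
    (hmu : ∀ x, 0 < mu nbr ω x) {d : ℕ} (hd : 2 ≤ d) {Creg : ℝ} (hCreg : 0 < Creg)
    {C s p q l ρ : ℝ} (hs : 1 ≤ s) (hC : 0 ≤ C) (hp : 1 < p)
    (hq : 1 < q) (hl : 0 < l) (hl1 : l < 1) (hρ : 0 < ρ) (hρl : 1 / ρ = l * (1 - 1 / p))
    (hρs : 1 / ρ = 2 / s - 1 + 1 / q) (hsd : 1 / s = 1 - 1 / (d : ℝ))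
    (hiso : ∀ A : Finset V, A.Nonempty →
      (A.card : ℝ) ^ (1 / s) ≤ C * ∑ x ∈ A, (((nbr x).filter (· ∉ A)).card : ℝ))
    {x₀ : V} {t₀ n s' s'' ε K Mμ Mν : ℝ} (hn : 1 ≤ n)
    (hvol : ((ball x₀ n).card : ℝ) ≤ Creg * n ^ d) (hε : 0 < ε) (hε1 : ε ≤ 1) (hss : s' ≤ s'')
    (hs' : ε * n ^ 2 ≤ s' - t₀) (hs'' : ε * n ^ 2 ≤ t₀ + n ^ 2 - s'')
    (hMμ : 1 ≤ Mμ) (hMν : 1 ≤ Mν) (hμM : nrm (ball x₀ n) p (mu nbr ω) ≤ Mμ)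
    (hνM : nrm (ball x₀ n) q (nu nbr ω) ≤ Mν)
    (hK : 92 / ε * (1 + (C * (2 * ρ / s)) ^ 2 * Creg ^ (2 / (d : ℝ))) ≤ K)
    {u : ℝ → V → ℝ} (hu : ∀ t ∈ Set.Icc t₀ (t₀ + n ^ 2), ∀ x, 0 < u t x)
    (hsuper : SuperCaloric nbr ω (Set.Icc t₀ (t₀ + n ^ 2)) (ball x₀ n : Set V) u)
    {γ σ' σ : ℝ} (hγ : 0 < γ) (hγ' : γ ≤ 1 / 2) (hσ' : 1 / 2 ≤ σ') (hσσ : σ' < σ) (hσ : σ ≤ 1) :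
    cylinderMass nbr ω (ball x₀) t₀ n s' s'' u ((2 - l) * γ) σ' ≤
      ((K * (Mμ * Mν) / (σ - σ') ^ 2) ^ 2 *
        cylinderMass nbr ω (ball x₀) t₀ n s' s'' u γ σ) ^ (2 - l) := by
  have hd0 : (0 : ℝ) < d := by exact_mod_cast (by omega : 0 < d)
  have hn0 : 0 < n := by linarith
  have hn2 : 0 < n ^ 2 := by positivity
  have hδ : 0 < σ - σ' := by linarith
  have hεn : 0 < ε * n ^ 2 := by positivity
  have hsub : ∀ {r r' : ℝ}, r ≤ r' → ball x₀ r ⊆ ball x₀ r' := fun h x hx =>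
    (hball _ _ _).2 (((hball _ _ _).1 hx).trans h)
  have hx₀ : x₀ ∈ ball x₀ n := (hball _ _ _).2 (by simp; linarith)
  have hN : (0 : ℝ) < (ball x₀ n).card := by exact_mod_cast Finset.card_pos.2 ⟨x₀, hx₀⟩
  have hσn : ball x₀ (σ * n) ⊆ ball x₀ n := hsub (by nlinarith)
  have hlo : t₀ ≤ σ * t₀ + (1 - σ) * s' := by
    linarith [mul_nonneg (by linarith : 0 ≤ 1 - σ) (by linarith : 0 ≤ s' - t₀)]
  have hhi : (1 - σ) * s'' + σ * (t₀ + n ^ 2) ≤ t₀ + n ^ 2 := by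
    linarith [mul_nonneg (by linarith : 0 ≤ 1 - σ) (by linarith : 0 ≤ t₀ + n ^ 2 - s'')]
  have hI : Set.Icc (σ * t₀ + (1 - σ) * s') ((1 - σ) * s'' + σ * (t₀ + n ^ 2)) ⊆
      Set.Icc t₀ (t₀ + n ^ 2) := Set.Icc_subset_Icc hlo hhi
  have hlohi : ∀ τ : ℝ, 0 ≤ τ → τ ≤ 1 →
      τ * t₀ + (1 - τ) * s' ≤ (1 - τ) * s'' + τ * (t₀ + n ^ 2) := fun τ h0 h1 => by
    linarith [mul_nonneg h0 hn2.le, mul_nonneg (sub_nonneg.2 h1) (sub_nonneg.2 hss)]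
  have hnu : ∀ x, 0 ≤ nu nbr ω x := fun x => Finset.sum_nonneg fun y hy =>
    (inv_pos.2 (hpos x y ((hnbr x y).1 hy))).le
  obtain ⟨η, hη0, hη1, hηin, hηout, hηL⟩ := exists_cutoff hG x₀
    (mul_lt_mul_of_pos_right hσσ hn0)
  have hstep := SuperCaloric.integral_mass_le hnbr hsymm hpos hnull hmu hs hC hp hq hl hl1 hρ hρl
    hρs hiso hγ hγ' hη0 hη1 (A := ball x₀ (σ * n)) (A' := ball x₀ (σ' * n))
    (fun x hx => hηout x fun h => hx ((hball _ _ _).2 h))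
    (hsub (by nlinarith)) (fun x hx => hηin x ((hball _ _ _).1 hx)) hηL
    (a := σ * t₀ + (1 - σ) * s') (a' := σ' * t₀ + (1 - σ') * s')
    (b' := (1 - σ') * s'' + σ' * (t₀ + n ^ 2)) (T := (1 - σ) * s'' + σ * (t₀ + n ^ 2))
    (D := (σ - σ') * (ε * n ^ 2)) (R := n ^ 2)
    (by linarith [mul_nonneg hδ.le (by linarith : 0 ≤ s' - t₀)])
    (hlohi σ' (by linarith) (by linarith)) (by positivity)
    (by linarith [mul_nonneg hδ.le (sub_nonneg.2 hs'')]) (by linarith) (fun t ht => hu t (hI ht))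
    (hsuper.mono hI (by exact_mod_cast hσn))
  rw [← sub_mul] at hstep
  unfold cylinderMass
  refine normalised_step_le hN hn hδ (by linarith) hε hε1 ?_ (sq_nonneg _) (by linarith)
    ?_ ?_ hMμ hMν hCreg hstep
    (sum_rpow_rpow_le_card_mul hσn ⟨x₀, hx₀⟩ hnu (by linarith) zero_le_one le_rfl hMν hνM)
    (sum_rpow_rpow_le_card_mul hσn ⟨x₀, hx₀⟩ (fun x => (hmu x).le) (by linarith) hl.le hl1.le
      hMμ hμM) (d' := 2 / (d : ℝ)) ?_ ?_ hK
  · exact intervalIntegral.integral_nonneg (hlohi σ (by linarith) hσ) fun t ht => Finset.sum_nonneg fun x _ =>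
      mul_nonneg (Real.rpow_nonneg (hu t (hI ht) x).le _) (hmu x).le
  · exact Real.rpow_nonneg (Finset.sum_nonneg fun x _ => Real.rpow_nonneg (hnu x) _) _
  · exact Real.rpow_nonneg (Finset.sum_nonneg fun x _ => Real.rpow_nonneg (hmu x).le _) _
  · have h1 : l * (1 - 1 / p) = 2 / s - 1 + 1 / q := hρl.symm.trans hρs
    have h2 : 2 / s = 2 * (1 - 1 / (d : ℝ)) := by rw [← hsd]; ring
    rw [h2] at h1
    have h3 : l / p = l * (1 / p) := by ring
    have h4 : 2 / (d : ℝ) = 2 * (1 / d) := by ring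
    rw [h3, h4]; linarith
  · calc ((ball x₀ n).card : ℝ) ^ (2 / (d : ℝ)) ≤ (Creg * n ^ d) ^ (2 / (d : ℝ)) :=
          Real.rpow_le_rpow hN.le hvol (by positivity)
      _ = Creg ^ (2 / (d : ℝ)) * n ^ 2 := by
        rw [Real.mul_rpow hCreg.le (by positivity), ← Real.rpow_natCast n d,
          ← Real.rpow_mul hn0.le, mul_div_cancel₀ _ hd0.ne', Real.rpow_two]

theorem cylinder_interval_bounds {t₀ n s' s'' σ : ℝ} (h₁ : t₀ ≤ s') (h₂ : s' ≤ s'')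
    (h₃ : s'' ≤ t₀ + n ^ 2) (hσ1 : σ ≤ 1) :
    t₀ ≤ σ * t₀ + (1 - σ) * s' ∧ (1 - σ) * s'' + σ * (t₀ + n ^ 2) ≤ t₀ + n ^ 2 ∧
      σ * n ^ 2 ≤ (1 - σ) * s'' + σ * (t₀ + n ^ 2) - (σ * t₀ + (1 - σ) * s') := by
  have h0 := sub_nonneg.2 hσ1
  refine ⟨?_, ?_, ?_⟩
  · linarith [mul_nonneg h0 (sub_nonneg.2 h₁)]
  · linarith [mul_nonneg h0 (sub_nonneg.2 h₃)]
  · linarith [mul_nonneg h0 (sub_nonneg.2 h₂)]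

theorem mass_nonneg {nbr : V → Finset V} {ω : V → V → ℝ} (hmu : ∀ x, 0 < mu nbr ω x)
    {u : ℝ → V → ℝ} {t : ℝ} (hu : ∀ x, 0 < u t x) (γ : ℝ) (A : Finset V) :
    0 ≤ mass nbr ω γ A u t :=
  Finset.sum_nonneg fun x _ => mul_nonneg (Real.rpow_nonneg (hu x).le _) (hmu x).le

theorem nrmST_eq_integral_mass {nbr : V → Finset V} {ω : V → V → ℝ} (hmu : ∀ x, 0 < mu nbr ω x)
    {u : ℝ → V → ℝ} {a b : ℝ} (hab : a ≤ b) (hu : ∀ t ∈ Set.Icc a b, ∀ x, 0 < u t x)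
    (A : Finset V) {β : ℝ} (hβ : 0 < β) :
    nrmST a b A β (mu nbr ω) u =
      (((b - a) * (A.card : ℝ))⁻¹ * ∫ t in a..b, mass nbr ω β A u t) ^ (1 / β) := by
  have hcongr : ∫ t in a..b, nrmW A β (mu nbr ω) (u t) ^ β =
      ∫ t in a..b, (A.card : ℝ)⁻¹ * mass nbr ω β A u t := by
    refine intervalIntegral.integral_congr fun t ht => ?_
    rw [Set.uIcc_of_le hab] at ht
    have h0 := mass_nonneg hmu (hu t ht) β A
    have h : nrmW A β (mu nbr ω) (u t) = ((A.card : ℝ)⁻¹ * mass nbr ω β A u t) ^ (1 / β) := by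
      simp only [nrmW, mass, abs_of_pos (hu t ht _)]
    rw [h, ← Real.rpow_mul (by positivity), one_div_mul_cancel hβ.ne', Real.rpow_one]
  rw [nrmST, hcongr, intervalIntegral.integral_const_mul, mul_inv, mul_assoc]

theorem SuperCaloric.intervalIntegrable_mass {nbr : V → Finset V} {ω : V → V → ℝ} {a b : ℝ}
    (hab : a ≤ b) {A : Finset V} {u : ℝ → V → ℝ}
    (h : SuperCaloric nbr ω (Set.Icc a b) (A : Set V) u)
    (hu : ∀ t ∈ Set.Icc a b, ∀ x, 0 < u t x) (γ : ℝ) :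
    IntervalIntegrable (mass nbr ω γ A u) volume a b :=
  ContinuousOn.intervalIntegrable (by rw [Set.uIcc_of_le hab]; exact h.continuousOn_mass hu γ)

theorem SuperCaloric.integral_mass_mono {nbr : V → Finset V} {ω : V → V → ℝ}
    (hmu : ∀ x, 0 < mu nbr ω x) {a a' b' b : ℝ} (ha : a ≤ a') (hab : a' ≤ b') (hb : b' ≤ b)
    {A A' : Finset V} (hA : A' ⊆ A) {u : ℝ → V → ℝ}
    (h : SuperCaloric nbr ω (Set.Icc a b) (A : Set V) u)
    (hu : ∀ t ∈ Set.Icc a b, ∀ x, 0 < u t x) (γ : ℝ) :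
    ∫ t in a'..b', mass nbr ω γ A' u t ≤ ∫ t in a..b, mass nbr ω γ A u t := by
  have hI : Set.Icc a' b' ⊆ Set.Icc a b := Set.Icc_subset_Icc ha hb
  have h' := h.mono hI subset_rfl
  have hu' : ∀ t ∈ Set.Icc a' b', ∀ x, 0 < u t x := fun t ht => hu t (hI ht)
  refine (intervalIntegral.integral_mono_on hab
    ((h'.mono subset_rfl (by exact_mod_cast hA)).intervalIntegrable_mass hab hu' γ)
    (h'.intervalIntegrable_mass hab hu' γ) fun t ht =>
      Finset.sum_le_sum_of_subset_of_nonneg hA fun x _ _ =>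
        mul_nonneg (Real.rpow_nonneg (hu' t ht x).le _) (hmu x).le).trans ?_
  refine intervalIntegral.integral_mono_interval ha hab hb ?_
    (h.intervalIntegrable_mass (by linarith) hu γ)
  filter_upwards [self_mem_ae_restrict measurableSet_Ioc] with t ht
  exact mass_nonneg hmu (hu t (Set.Ioc_subset_Icc_self ht)) γ A

theorem SuperCaloric.integral_mass_pos {nbr : V → Finset V} {ω : V → V → ℝ}
    (hmu : ∀ x, 0 < mu nbr ω x) {a b : ℝ} (hab : a < b) {A : Finset V} (hA : A.Nonempty)
    {u : ℝ → V → ℝ} (h : SuperCaloric nbr ω (Set.Icc a b) (A : Set V) u)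
    (hu : ∀ t ∈ Set.Icc a b, ∀ x, 0 < u t x) (γ : ℝ) :
    0 < ∫ t in a..b, mass nbr ω γ A u t :=
  intervalIntegral.intervalIntegral_pos_of_pos_on (h.intervalIntegrable_mass hab.le hu γ)
    (fun t ht => Finset.sum_pos (fun x _ => mul_pos
      (Real.rpow_pos_of_pos (hu t (Set.Ioo_subset_Icc_self ht) x) _) (hmu x)) hA) hab

/-- Jensen's inequality for the concave power `γ / α` of the space-time average of `u ^ α`. -/
theorem SuperCaloric.integral_mass_le_rpow {nbr : V → Finset V} {ω : V → V → ℝ}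
    (hmu : ∀ x, 0 < mu nbr ω x) {a b : ℝ} (hab : a < b) {A : Finset V} (hA : A.Nonempty)
    {u : ℝ → V → ℝ} (h : SuperCaloric nbr ω (Set.Icc a b) (A : Set V) u)
    (hu : ∀ t ∈ Set.Icc a b, ∀ x, 0 < u t x) {γ α κ M : ℝ} (hγ : 0 < γ) (hγα : γ ≤ α)
    (hκ : 0 < κ) (hM : 1 ≤ M) (hμM : κ * ((b - a) * ∑ x ∈ A, mu nbr ω x) ≤ M) :
    κ * ∫ t in a..b, mass nbr ω γ A u t ≤
      M * (κ * ∫ t in a..b, mass nbr ω α A u t) ^ (γ / α) := by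
  have hα : 0 < α := by linarith
  set P := κ * ∫ t in a..b, mass nbr ω α A u t with hP
  have hP0 : 0 < P := mul_pos hκ (h.integral_mass_pos hmu hab hA hu α)
  set θ := γ / α with hθ
  have hθ0 : 0 ≤ θ := by positivity
  have hθ1 : θ ≤ 1 := (div_le_one hα).2 hγα
  have hpt : ∀ y : ℝ, 0 < y → y ^ γ ≤ P ^ θ * (θ / P * y ^ α + (1 - θ)) := fun y hy => by
    have hgm := Real.geom_mean_le_arith_mean2_weighted hθ0 (by linarith : 0 ≤ 1 - θ)
      (by positivity : 0 ≤ y ^ α / P) zero_le_one (by ring)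
    rw [Real.one_rpow, mul_one, mul_one, Real.div_rpow (by positivity) hP0.le,
      ← Real.rpow_mul hy.le, hθ, mul_div_cancel₀ _ hα.ne', ← hθ,
      div_le_iff₀ (Real.rpow_pos_of_pos hP0 _)] at hgm
    calc y ^ γ ≤ _ := hgm
      _ = _ := by ring
  set m := ∑ x ∈ A, mu nbr ω x with hm
  have hmass : ∀ t ∈ Set.Icc a b, mass nbr ω γ A u t ≤
      P ^ θ * (θ / P * mass nbr ω α A u t + (1 - θ) * m) := fun t ht => by
    have hsum : P ^ θ * (θ / P * mass nbr ω α A u t + (1 - θ) * m) =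
        ∑ x ∈ A, P ^ θ * (θ / P * u t x ^ α + (1 - θ)) * mu nbr ω x := by
      rw [mass, hm, Finset.mul_sum, Finset.mul_sum, ← Finset.sum_add_distrib, Finset.mul_sum]
      exact Finset.sum_congr rfl fun x _ => by ring
    rw [hsum]
    exact Finset.sum_le_sum fun x _ =>
      mul_le_mul_of_nonneg_right (hpt _ (hu t ht x)) (hmu x).le
  have hint := h.intervalIntegrable_mass hab.le hu α
  have hle : ∫ t in a..b, mass nbr ω γ A u t ≤
      P ^ θ * (θ / P * (∫ t in a..b, mass nbr ω α A u t) + (1 - θ) * ((b - a) * m)) := by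
    refine (intervalIntegral.integral_mono_on hab.le (h.intervalIntegrable_mass hab.le hu γ)
      (((hint.const_mul (θ / P)).add intervalIntegrable_const).const_mul (P ^ θ))
      hmass).trans_eq ?_
    rw [intervalIntegral.integral_const_mul, intervalIntegral.integral_add
      (hint.const_mul (θ / P)) intervalIntegrable_const, intervalIntegral.integral_const_mul,
      intervalIntegral.integral_const, smul_eq_mul]
    ring
  have hPθ : 0 < P ^ θ := Real.rpow_pos_of_pos hP0 _
  calc κ * ∫ t in a..b, mass nbr ω γ A u t
      ≤ κ * (P ^ θ * (θ / P * (∫ t in a..b, mass nbr ω α A u t) + (1 - θ) * ((b - a) * m))) :=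
        mul_le_mul_of_nonneg_left hle hκ.le
    _ = P ^ θ * (θ / P * P + (1 - θ) * (κ * ((b - a) * m))) := by
        nth_rewrite 5 [hP]; ring
    _ = P ^ θ * (θ + (1 - θ) * (κ * ((b - a) * m))) := by rw [div_mul_cancel₀ _ hP0.ne']
    _ ≤ P ^ θ * M := by
        refine mul_le_mul_of_nonneg_left ?_ hPθ.le
        nlinarith [mul_le_mul_of_nonneg_left hμM (sub_nonneg.2 hθ1)]
    _ = M * P ^ θ := mul_comm _ _

/-- Balls of radius `r / 2` and `r` have comparable volume. -/
theorem card_ball_le_of_half_le {G : SimpleGraph V} {ball : V → ℝ → Finset V}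
    (hball : ∀ (x : V) (r : ℝ) (y : V), y ∈ ball x r ↔ (G.dist x y : ℝ) ≤ r)
    {d : ℕ} {Creg : ℝ} (hCreg : 0 < Creg)
    (hreg : ∀ (x : V) (r : ℝ), 1 ≤ r →
      Creg⁻¹ * r ^ d ≤ ((ball x r).card : ℝ) ∧ ((ball x r).card : ℝ) ≤ Creg * r ^ d)
    (x : V) {n r : ℝ} (hn : 1 ≤ n) (hr : n / 2 ≤ r) :
    ((ball x n).card : ℝ) ≤ (Creg ^ 2 + Creg) * 2 ^ d * (ball x r).card := by
  have hup := (hreg x n hn).2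
  rcases le_or_gt 2 n with h2 | h2
  · have hlow := (hreg x r (by linarith)).1
    rw [inv_mul_le_iff₀ hCreg] at hlow
    have hpow : n ^ d ≤ 2 ^ d * r ^ d := by
      rw [← mul_pow]; exact pow_le_pow_left₀ (by linarith) (by linarith) _
    calc ((ball x n).card : ℝ) ≤ Creg * (2 ^ d * (Creg * (ball x r).card)) := by
          refine hup.trans (mul_le_mul_of_nonneg_left (hpow.trans ?_) hCreg.le)
          exact mul_le_mul_of_nonneg_left hlow (by positivity)
      _ = Creg ^ 2 * 2 ^ d * (ball x r).card := by ring
      _ ≤ _ := by gcongr; linarith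
  · have hx : x ∈ ball x r := (hball _ _ _).2 (by simp; linarith)
    have h1 : (1 : ℝ) ≤ (ball x r).card := by exact_mod_cast Finset.card_pos.2 ⟨x, hx⟩
    calc ((ball x n).card : ℝ) ≤ Creg * 2 ^ d :=
          hup.trans (mul_le_mul_of_nonneg_left (pow_le_pow_left₀ (by linarith) h2.le _) hCreg.le)
      _ ≤ (Creg ^ 2 + Creg) * 2 ^ d := by gcongr; nlinarith
      _ ≤ _ := le_mul_of_one_le_right (by positivity) h1

theorem exists_pow_mul_near {a α β : ℝ} (ha : 1 < a) (hα : 0 < α) (hαβ : α ≤ β) :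
    ∃ (k : ℕ) (γ : ℝ), 0 < γ ∧ γ ≤ α ∧ 1 / γ ≤ a / α ∧ a ^ k * γ = β := by
  have ha0 : 0 < a := by linarith
  obtain ⟨m, hm, hm'⟩ := exists_nat_pow_near ((one_le_div hα).2 hαβ) ha
  have hβ : 0 < β := by linarith
  rw [le_div_iff₀ hα] at hm
  rw [div_lt_iff₀ hα] at hm'
  refine ⟨m + 1, β / a ^ (m + 1), by positivity, ?_, ?_, mul_div_cancel₀ _ (by positivity)⟩
  · rw [div_le_iff₀ (by positivity)]; linarith
  · rw [one_div_div, div_le_div_iff₀ hβ hα, pow_succ]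
    nlinarith

theorem rpow_le_of_iterated {Z A P F F' a c α β γ : ℝ} {k : ℕ} (hZ : 1 ≤ Z) (hc : 0 < c)
    (ha : 1 < a) (hα : 0 < α) (hαβ : α < β / 2) (hγ : 0 < γ) (hγa : 1 / γ ≤ a / α)
    (hk : a ^ k * γ = β) (hP : 0 < P) (hA : A ≤ (Z ^ c * (Z * P ^ (γ / α))) ^ (a ^ k))
    (hF0 : 0 ≤ F) (hF : F ≤ Z * A) (hF' : P ≤ F') :
    F ^ (1 / β) ≤ Z ^ ((2 * a * (c + 1) + 1) * (1 / α - 1 / β)) * F' ^ (1 / α) := by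
  have hβ : 0 < β := by linarith
  have hZ0 : 0 < Z := by linarith
  have hak : (a ^ k : ℝ) = β / γ := by rw [← hk]; field_simp
  have hA' : A ≤ (Z ^ (c + 1) * P ^ (γ / α)) ^ (β / γ) := by
    rw [← hak, Real.rpow_add_one hZ0.ne', mul_assoc]
    exact hA
  have hexp : 1 / β + (c + 1) / γ ≤ (2 * a * (c + 1) + 1) * (1 / α - 1 / β) := by
    have h1 : 1 / β ≤ 1 / (2 * α) := one_div_le_one_div_of_le (by positivity) (by linarith)
    have h2 : 1 / (2 * α) = 1 / α / 2 := by field_simp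
    have h3 : (c + 1) / γ ≤ (c + 1) * (a * (2 * (1 / α - 1 / β))) := by
      rw [div_eq_mul_one_div]
      refine mul_le_mul_of_nonneg_left (hγa.trans ?_) (by linarith)
      rw [div_eq_mul_one_div]
      exact mul_le_mul_of_nonneg_left (by linarith) (by linarith)
    linarith
  calc F ^ (1 / β)
      ≤ (Z * (Z ^ (c + 1) * P ^ (γ / α)) ^ (β / γ)) ^ (1 / β) :=
        Real.rpow_le_rpow hF0 (hF.trans (mul_le_mul_of_nonneg_left hA' hZ0.le)) (by positivity)
    _ = Z ^ (1 / β + (c + 1) / γ) * P ^ (1 / α) := by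
        rw [Real.mul_rpow hZ0.le (by positivity), ← Real.rpow_mul (by positivity),
          Real.mul_rpow (by positivity) (by positivity), ← Real.rpow_mul hZ0.le,
          ← Real.rpow_mul hP.le, Real.rpow_add hZ0, mul_assoc]
        congr 3 <;> field_simp
    _ ≤ _ := by
        gcongr

/-- Exponents for which the weighted Sobolev inequality interpolates with the mass bound. -/
theorem exists_sobolev_exponents {d : ℕ} (hd : 2 ≤ d) {p q : ℝ} (hp : 1 < p) (hq : 1 < q)
    (hpq : 1 / p + 1 / q < 2 / d) :
    ∃ s ρ l : ℝ, 1 ≤ s ∧ 0 < ρ ∧ 0 < l ∧ l < 1 ∧ 1 / s = 1 - 1 / (d : ℝ) ∧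
      1 / ρ = l * (1 - 1 / p) ∧ 1 / ρ = 2 / s - 1 + 1 / q := by
  have hd2 : (2 : ℝ) ≤ d := by exact_mod_cast hd
  have hd0 : (0 : ℝ) < d := by linarith
  have hdi : 0 < 1 / (d : ℝ) := by positivity
  have hdi2 : 1 / (d : ℝ) ≤ 1 / 2 := one_div_le_one_div_of_le two_pos hd2
  have hdd : 2 / (d : ℝ) = 2 * (1 / d) := by ring
  have hqi : 0 < 1 / q := by positivity
  have hpi : 0 < 1 - 1 / p := by
    rw [sub_pos, div_lt_one (by linarith)]; exact hp
  have hr : 0 < 1 - 2 / (d : ℝ) + 1 / q := by rw [hdd]; linarith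
  have hs : 2 / (1 / (1 - 1 / (d : ℝ))) - 1 + 1 / q = 1 - 2 / (d : ℝ) + 1 / q := by
    rw [div_div_eq_mul_div, hdd]; ring
  refine ⟨1 / (1 - 1 / (d : ℝ)), 1 / (1 - 2 / (d : ℝ) + 1 / q),
    (1 - 2 / (d : ℝ) + 1 / q) / (1 - 1 / p), ?_, by positivity, by positivity, ?_, ?_, ?_, ?_⟩
  · rw [le_div_iff₀ (by linarith)]; linarith
  · rw [div_lt_one hpi]; linarith
  · rw [one_div_one_div]
  · rw [one_div_one_div, div_mul_cancel₀ _ hpi.ne']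
  · rw [one_div_one_div, hs]

end RCM

set_option maxHeartbeats 800000 in
open RCM in
/-- **Reverse parabolic Moser iteration for super-caloric functions.** -/
theorem reverse_parabolic_moser_iteration_supercaloric
    (d : ℕ) (hd : 2 ≤ d) (Creg Criso : ℝ) (hCreg : 0 < Creg) (hCriso : 0 < Criso)
    (p q : ℝ≥0∞) (hp : 1 < p) (hq : 1 < q) (hpq : p⁻¹ + q⁻¹ < 2 / (d : ℝ≥0∞))
    (ε : ℝ) (hε : 0 < ε) (hε' : ε < 1 / 4) :
    ∃ C₁₀ κ : ℝ, 0 < C₁₀ ∧ 0 < κ ∧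
      ∀ (V : Type) (G : SimpleGraph V) (nbr : V → Finset V)
        (_ : ∀ x y, y ∈ nbr x ↔ G.Adj x y)
        (_ : Infinite V) (_ : G.Connected)
        (ball : V → ℝ → Finset V)
        (_ : ∀ (x : V) (r : ℝ) (y : V), y ∈ ball x r ↔ (G.dist x y : ℝ) ≤ r)
        (_ : ∀ (x : V) (r : ℝ), 1 ≤ r →
              Creg⁻¹ * r ^ d ≤ ((ball x r).card : ℝ) ∧ ((ball x r).card : ℝ) ≤ Creg * r ^ d)
        (_ : ∀ (x : V) (r : ℝ) (A : Finset V), 1 ≤ r → A.Nonempty → A ⊆ ball x r →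
              (A.card : ℝ) < ((ball x r).card : ℝ) / 2 →
              Criso / r ≤ ((RCM.relBdry G (ball x r) A).card : ℝ) / (A.card : ℝ))
        (ω : V → V → ℝ)
        (_ : ∀ x y, ω x y = ω y x)
        (_ : ∀ x y, G.Adj x y → 0 < ω x y)
        (_ : ∀ x y, ¬ G.Adj x y → ω x y = 0)
        (x₀ : V) (t₀ n s' s'' : ℝ) (_ : 0 ≤ t₀) (_ : 1 ≤ n)
        (_ : t₀ ≤ s') (_ : s' ≤ s'') (_ : s'' ≤ t₀ + n ^ 2)
        (_ : ε * n ^ 2 ≤ s' - t₀)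
        (_ : ε * n ^ 2 ≤ t₀ + n ^ 2 - s'')
        (u : ℝ → V → ℝ)
        (_ : ∀ t ∈ Set.Icc t₀ (t₀ + n ^ 2), ∀ x, 0 < u t x)
        (_ : SuperCaloric nbr ω (Set.Icc t₀ (t₀ + n ^ 2)) (ball x₀ n : Set V) u)
        (β : ℝ) (_ : 0 < β) (_ : β < 1 / 2)
        (α : ℝ) (_ : 0 < α) (_ : α < β / 2)
        (σ' σ : ℝ) (_ : 1 / 2 ≤ σ') (_ : σ' < σ) (_ : σ ≤ 1),
        nrmST (σ' * t₀ + (1 - σ') * s') ((1 - σ') * s'' + σ' * (t₀ + n ^ 2))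
            (ball x₀ (σ' * n)) β (mu nbr ω) u ≤
          (C₁₀ * (max 1 (nrmE (ball x₀ n) p (mu nbr ω)) *
              max 1 (nrmE (ball x₀ n) q (nu nbr ω))) / (σ - σ') ^ 2) ^
              (κ * (1 / α - 1 / β)) *
            nrmST (σ * t₀ + (1 - σ) * s') ((1 - σ) * s'' + σ * (t₀ + n ^ 2))
              (ball x₀ (σ * n)) α (mu nbr ω) u := by
  obtain ⟨p', q', hp', hq', hpq', hpp, hqq⟩ := exists_real_exponents hd hp hq hpq
  obtain ⟨s, ρ, l, hs, hρ, hl, hl1, hsd, hρl, hρs⟩ := exists_sobolev_exponents hd hp' hq' hpq'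
  obtain ⟨c, hc, hiter⟩ := exists_iteration_exponent (by linarith : 1 < 2 - l)
  set C := Creg ^ 2 * (3 * Creg) ^ (1 / (d : ℝ)) / Criso with hC
  have hC0 : 0 ≤ C := by positivity
  set K₁ := 92 / ε * (1 + (C * (2 * ρ / s)) ^ 2 * Creg ^ (2 / (d : ℝ))) with hK₁
  set K₂ := 2 * ((Creg ^ 2 + Creg) * 2 ^ d) with hK₂
  have hK₁1 : 1 ≤ K₁ := by
    refine one_le_mul_of_one_le_of_one_le ?_ ?_
    · rw [le_div_iff₀ hε]; linarith
    · have : 0 ≤ (C * (2 * ρ / s)) ^ 2 * Creg ^ (2 / (d : ℝ)) := by positivity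
      linarith
  have hK₂0 : 0 < K₂ := by positivity
  refine ⟨K₁ + K₂, 2 * (2 - l) * (c + 1) + 1, by linarith,
    by nlinarith [mul_pos (by linarith : 0 < 2 - l) (by linarith : 0 < c + 1)], ?_⟩
  intro V G nbr hnbr hinf hG ball hball hreg hriso ω hsymm hpos hnull x₀ t₀ n s' s'' _ hn h₁ h₂ h₃
    hs' hs'' u hu hsuper β hβ hβ' α hα hαβ σ' σ hσ' hσσ hσ
  have hmu : ∀ x, 0 < mu nbr ω x := mu_pos hnbr hG hpos
  have hn2 : 0 < n ^ 2 := by positivity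
  have hn0 : 0 ≤ n := by linarith
  have hτn : ∀ τ : ℝ, 1 / 2 ≤ τ → 0 ≤ τ * n := fun τ h => mul_nonneg (by linarith) hn0
  have hx₀ : ∀ r : ℝ, 0 ≤ r → x₀ ∈ ball x₀ r := fun r hr => (hball _ _ _).2 (by simpa using hr)
  have hne : (ball x₀ n).Nonempty := ⟨x₀, hx₀ n (by linarith)⟩
  have hcard : ∀ r : ℝ, 0 ≤ r → (0 : ℝ) < (ball x₀ r).card := fun r hr => by
    exact_mod_cast Finset.card_pos.2 ⟨x₀, hx₀ r hr⟩
  have hsub : ∀ {r r' : ℝ}, r ≤ r' → ball x₀ r ⊆ ball x₀ r' := fun h x hx =>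
    (hball _ _ _).2 (((hball _ _ _).1 hx).trans h)
  set N : ℝ := ((ball x₀ n).card : ℝ) with hN
  have hN0 : 0 < N := hcard n (by linarith)
  set Mμ := max 1 (nrmE (ball x₀ n) p (mu nbr ω)) with hMμ
  set Mν := max 1 (nrmE (ball x₀ n) q (nu nbr ω)) with hMν
  have hμM : nrm (ball x₀ n) p' (mu nbr ω) ≤ Mμ :=
    (nrm_le_nrmE hne _ (by linarith) hpp).trans (le_max_right _ _)
  have hνM : nrm (ball x₀ n) q' (nu nbr ω) ≤ Mν :=
    (nrm_le_nrmE hne _ (by linarith) hqq).trans (le_max_right _ _)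
  have hMμ1 : 1 ≤ Mμ := le_max_left _ _
  have hMν1 : 1 ≤ Mν := le_max_left _ _
  have hM1 : 1 ≤ Mμ * Mν := one_le_mul_of_one_le_of_one_le hMμ1 hMν1
  set lo : ℝ → ℝ := fun τ => τ * t₀ + (1 - τ) * s' with hlo
  set hi : ℝ → ℝ := fun τ => (1 - τ) * s'' + τ * (t₀ + n ^ 2) with hhi
  have hI : ∀ τ : ℝ, τ ≤ 1 → t₀ ≤ lo τ ∧ hi τ ≤ t₀ + n ^ 2 ∧ τ * n ^ 2 ≤ hi τ - lo τ :=
    fun τ hτ => cylinder_interval_bounds h₁ h₂ h₃ hτ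
  have hIsub : ∀ τ : ℝ, τ ≤ 1 → Set.Icc (lo τ) (hi τ) ⊆ Set.Icc t₀ (t₀ + n ^ 2) :=
    fun τ hτ => Set.Icc_subset_Icc (hI τ hτ).1 (hI τ hτ).2.1
  have hlohi : ∀ τ : ℝ, 1 / 2 ≤ τ → τ ≤ 1 → lo τ < hi τ := fun τ h0 hτ => by
    have := mul_pos (by linarith : 0 < τ) hn2
    linarith [(hI τ hτ).2.2]
  have hup : ∀ τ : ℝ, τ ≤ 1 → ∀ t ∈ Set.Icc (lo τ) (hi τ), ∀ x, 0 < u t x :=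
    fun τ hτ t ht => hu t (hIsub τ hτ ht)
  have hcal : ∀ τ : ℝ, τ ≤ 1 →
      SuperCaloric nbr ω (Set.Icc (lo τ) (hi τ)) (ball x₀ (τ * n) : Set V) u := fun τ hτ =>
    hsuper.mono (hIsub τ hτ) (by exact_mod_cast hsub (mul_le_of_le_one_left hn0 hτ))
  set Φ := cylinderMass nbr ω (ball x₀) t₀ n s' s'' u with hΦ
  have hΦeq : ∀ γ τ, Φ γ τ =
      (n ^ 2 * N)⁻¹ * ∫ t in lo τ..hi τ, mass nbr ω γ (ball x₀ (τ * n)) u t := fun _ _ => rfl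
  have hΦpos : ∀ γ τ, 1 / 2 ≤ τ → τ ≤ 1 → 0 < Φ γ τ := fun γ τ h0 hτ => by
    rw [hΦeq]
    exact mul_pos (by positivity) ((hcal τ hτ).integral_mass_pos hmu (hlohi τ h0 hτ)
      ⟨x₀, hx₀ _ (hτn τ h0)⟩ (hup τ hτ) γ)
  set Q := (K₁ + K₂) * (Mμ * Mν) with hQ
  have hQ1 : 1 ≤ Q := one_le_mul_of_one_le_of_one_le (by linarith) hM1
  set Z := Q / (σ - σ') ^ 2 with hZ
  have hQZ : Q ≤ Z := by
    rw [hZ, le_div_iff₀ (by have := sub_pos.2 hσσ; positivity)]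
    exact mul_le_of_le_one_right (by linarith)
      (pow_le_one₀ (by linarith) (by linarith))
  obtain ⟨k, γ, hγ, hγα, hγa, hk⟩ :=
    exists_pow_mul_near (by linarith : 1 < 2 - l) hα (by linarith : α ≤ β)
  have hiterated := hiter Φ Q hQ1 (fun γ τ _ h0 hτ => (hΦpos γ τ h0 hτ).le)
    (fun γ τ' τ _ h0 hττ hτ => by
      rw [hΦeq, hΦeq]
      refine mul_le_mul_of_nonneg_left ((hcal τ hτ).integral_mass_mono hmu ?_
        (hlohi τ' h0 (by linarith)).le ?_ (hsub (mul_le_mul_of_nonneg_right hττ.le hn0))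
        (hup τ hτ) γ) (by positivity)
      · simp only [hlo]
        linarith [mul_nonneg (sub_nonneg.2 hττ.le) (sub_nonneg.2 h₁)]
      · simp only [hhi]
        linarith [mul_nonneg (sub_nonneg.2 hττ.le) (sub_nonneg.2 h₃)])
    (fun γ τ' τ hγ hγ' h0 hττ hτ => SuperCaloric.cylinderMass_step hnbr hG hball hsymm hpos
      hnull hmu hd hCreg hs hC0 hp' hq' hl hl1 hρ hρl hρs hsd
      (fun A hA => by
        rw [hsd]
        exact isoperimetric hnbr hball hd hCreg hCriso hreg hriso A hA)
      hn (hreg x₀ n hn).2 hε (by linarith) h₂ hs' hs'' hMμ1 hMν1 hμM hνM (by linarith) hu hsuper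
      hγ hγ' h0 hττ hτ)
    k γ σ' σ hγ (by linarith) hσ' hσσ hσ
  rw [hk] at hiterated
  have hσ2 : 1 / 2 ≤ σ := by linarith
  have hσ'1 : σ' ≤ 1 := by linarith
  have hB : ball x₀ (σ * n) ⊆ ball x₀ n := hsub (mul_le_of_le_one_left hn0 hσ)
  have hlen : hi σ - lo σ ≤ n ^ 2 := by linarith [(hI σ hσ).1, (hI σ hσ).2.1]
  have hμsum : 0 ≤ ∑ x ∈ ball x₀ (σ * n), mu nbr ω x := Finset.sum_nonneg fun x _ => (hmu x).le
  have hjensen : Φ γ σ ≤ Z * Φ α σ ^ (γ / α) := by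
    rw [hΦeq, hΦeq]
    refine (hcal σ hσ).integral_mass_le_rpow hmu (hlohi σ hσ2 hσ) ⟨x₀, hx₀ _ (hτn σ hσ2)⟩
      (hup σ hσ) hγ hγα (by positivity) (hQ1.trans hQZ) ?_
    calc (n ^ 2 * N)⁻¹ * ((hi σ - lo σ) * ∑ x ∈ ball x₀ (σ * n), mu nbr ω x)
        ≤ (n ^ 2 * N)⁻¹ * (n ^ 2 * ∑ x ∈ ball x₀ n, mu nbr ω x) := by
          refine mul_le_mul_of_nonneg_left (mul_le_mul hlen ?_ hμsum hn2.le) (by positivity)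
          exact Finset.sum_le_sum_of_subset_of_nonneg hB fun x _ _ => (hmu x).le
      _ = N⁻¹ * ∑ x ∈ ball x₀ n, mu nbr ω x := by field_simp
      _ ≤ Mμ := (card_inv_mul_sum_le_nrm hne hp' fun x => (hmu x).le).trans hμM
      _ ≤ Mμ * Mν := le_mul_of_one_le_right (by linarith) hMν1
      _ ≤ Q := le_mul_of_one_le_left (by linarith) (by linarith)
      _ ≤ Z := hQZ
  have hZ0 : 0 < Z := by linarith
  rw [nrmST_eq_integral_mass hmu (hlohi σ' hσ' hσ'1).le (hup σ' hσ'1) _ hβ,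
    nrmST_eq_integral_mass hmu (hlohi σ hσ2 hσ).le (hup σ hσ) _ hα]
  have hlen' : n ^ 2 / 2 ≤ hi σ' - lo σ' := by
    linarith [(hI σ' hσ'1).2.2, mul_le_mul_of_nonneg_right hσ' hn2.le]
  have hint' : 0 < ∫ t in lo σ'..hi σ', mass nbr ω β (ball x₀ (σ' * n)) u t :=
    (hcal σ' hσ'1).integral_mass_pos hmu (hlohi σ' hσ' hσ'1) ⟨x₀, hx₀ _ (hτn σ' hσ')⟩
      (hup σ' hσ'1) β
  have hint : 0 < ∫ t in lo σ..hi σ, mass nbr ω α (ball x₀ (σ * n)) u t :=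
    (hcal σ hσ).integral_mass_pos hmu (hlohi σ hσ2 hσ) ⟨x₀, hx₀ _ (hτn σ hσ2)⟩ (hup σ hσ) α
  have hc' := hcard (σ' * n) (hτn σ' hσ')
  have hc₀ := hcard (σ * n) (hτn σ hσ2)
  have hl' : 0 < hi σ' - lo σ' := by linarith
  have hl₀ : 0 < hi σ - lo σ := by linarith [hlohi σ hσ2 hσ]
  refine rpow_le_of_iterated (hQ1.trans hQZ) hc (by linarith) hα hαβ hγ hγa hk (hΦpos α σ hσ2 hσ)
    (hiterated.trans ?_) (by positivity) (A := Φ β σ') ?_ ?_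
  · exact Real.rpow_le_rpow (mul_nonneg (Real.rpow_nonneg hZ0.le _) (hΦpos γ σ hσ2 hσ).le)
      (mul_le_mul_of_nonneg_left hjensen (Real.rpow_nonneg hZ0.le _))
      (pow_nonneg (by linarith) _)
  · rw [hΦeq, ← mul_assoc]
    refine mul_le_mul_of_nonneg_right ?_ hint'.le
    rw [inv_le_comm₀ (by positivity) (by positivity), mul_inv, inv_inv]
    have hvol := card_ball_le_of_half_le hball hCreg hreg x₀ hn
      (by linarith [mul_le_mul_of_nonneg_right hσ' hn0] : n / 2 ≤ σ' * n)
    have hKZ : K₂ ≤ Z := by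
      refine le_trans ?_ hQZ
      calc K₂ ≤ K₁ + K₂ := by linarith
        _ ≤ Q := le_mul_of_one_le_right (by linarith) hM1
    rw [inv_mul_le_iff₀ hZ0]
    calc n ^ 2 * N ≤ (2 * (hi σ' - lo σ')) * ((Creg ^ 2 + Creg) * 2 ^ d *
          ((ball x₀ (σ' * n)).card : ℝ)) := by gcongr; linarith
      _ = K₂ * ((hi σ' - lo σ') * ((ball x₀ (σ' * n)).card : ℝ)) := by rw [hK₂]; ring
      _ ≤ _ := by gcongr
  · rw [hΦeq]
    refine mul_le_mul_of_nonneg_right ?_ hint.le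
    refine inv_anti₀ (by positivity) (mul_le_mul hlen ?_ hc₀.le hn2.le)
    exact Nat.cast_le.2 (Finset.card_le_card hB)
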